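/- There are infinitely many integers r ≥ 0 with γ_{r+1} > γ_r, and infinitely many integers r ≥ 0 with γ_{r+1} < γ_r. -/

import Mathlib

open Filter

/-- Generalized Euler constant for a finite set of primes `P`:
`γ(P) = ∏_{p∈P}(1 - 1/p) * (γ + ∑_{p∈P} log p / (p-1))`. -/
noncomputable def gammaP (P : Finset ℕ) : ℝ :=
  (∏ p ∈ P, (1 - 1 / (p : ℝ))) *
    (Real.eulerMascheroniConstant + ∑ p ∈ P, Real.log p / ((p : ℝ) - 1))

/-- `γ_r = γ({p_1, …, p_r})`, the generalized Euler constant for the first `r` primes. -/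
noncomputable def gammaR (r : ℕ) : ℝ :=
  gammaP ((Finset.range r).image (Nat.nth Nat.Prime))

/-!
With `p = p_{r+1}`, the difference `γ_{r+1} - γ_r` is a positive multiple of
`log p - γ - ∑_{i ≤ r} log p_i / (p_i - 1)`, so everything depends on the signs of
`Δ(x) = γ + ∑_{q ≤ x} log q / (q - 1) - log x`. If one of the two sets of indices were finite, then
`ε Δ(x) + C x ^ (-3/4) ≥ 0` for all `x > 1`, with some `ε = ±1` and `C ≥ 0`. Let `M` be the Mellin
transform of this nonnegative function.

The function `s M(s)` is, up to terms regular for `Re s > -1/2`, equal to `-ε ζ'/ζ(s + 1)` with the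
pole at `s = 0` removed. It has no real singularities to the right of `-1/2`, so Landau's theorem
makes the integral converge for `Re s > -1/2`; in particular the Riemann hypothesis holds. At
`-1/2 + iτ` the function `M` has polar part `ε (m(τ) + [τ = 0] / 2) / (1/2 - iτ)`, where `m(τ)` is
the multiplicity of `1/2 + iτ` as a zero of `ζ` and the extra `1/2` comes from the squares of
primes. The value at `τ = 0` forces `ε = 1`. Since `M` is the transform of a nonnegative function,
these polar parts are positive definite in `τ`; testing this on almost invariant finite sets of
ordinates bounds `∑_γ m(γ) σ / (σ ^ 2 + γ ^ 2)` independently of `σ ≥ 1/2`.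

But under the Riemann hypothesis that sum equals `Re ξ'/ξ(1/2 + σ)`, which grows like
`log σ / 2` by Stirling's formula, a contradiction.
-/

open Topology

section Landau

open MeasureTheory ProbabilityTheory

variable {Ω : Type*} [MeasurableSpace Ω] {μ : Measure Ω} {X : Ω → ℝ}

lemma isUpperSet_integrableExpSet_of_nonpos (hX : AEMeasurable X μ) (hX0 : ∀ᵐ ω ∂μ, X ω ≤ 0) :
    IsUpperSet (integrableExpSet X μ) := by
  intro s t hst hs
  refine Integrable.mono' hs (by fun_prop) ?_
  filter_upwards [hX0] with ω h
  rw [Real.norm_eq_abs, Real.abs_exp]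
  exact Real.exp_le_exp.2 (mul_le_mul_of_nonpos_right hst h)

lemma integrable_of_hasSum_of_nonneg {g : ℕ → Ω → ℝ} {G : Ω → ℝ} (hG : AEStronglyMeasurable G μ)
    (hg : ∀ n, Integrable (g n) μ) (hg0 : ∀ n, 0 ≤ᵐ[μ] g n)
    (hsum : Summable fun n ↦ ∫ ω, g n ω ∂μ) (hgG : ∀ᵐ ω ∂μ, HasSum (fun n ↦ g n ω) (G ω)) :
    Integrable G μ := by
  have hG0 : 0 ≤ᵐ[μ] G := by
    filter_upwards [hgG, ae_all_iff.2 hg0] with ω h h0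
    exact h.nonneg h0
  refine ⟨hG, ?_⟩
  rw [hasFiniteIntegral_iff_ofReal hG0]
  calc ∫⁻ ω, ENNReal.ofReal (G ω) ∂μ
      = ∫⁻ ω, ∑' n, ENNReal.ofReal (g n ω) ∂μ := by
        refine lintegral_congr_ae ?_
        filter_upwards [hgG, ae_all_iff.2 hg0] with ω h h0
        rw [← h.tsum_eq, ENNReal.ofReal_tsum_of_nonneg h0 h.summable]
    _ = ∑' n, ENNReal.ofReal (∫ ω, g n ω ∂μ) := by
        rw [lintegral_tsum fun n ↦ (hg n).aemeasurable.ennreal_ofReal]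
        exact tsum_congr fun n ↦ (ofReal_integral_eq_lintegral_ofReal (hg n) (hg0 n)).symm
    _ < ⊤ := by
        rw [← ENNReal.ofReal_tsum_of_nonneg (fun n ↦ integral_nonneg_of_ae (hg0 n)) hsum]
        exact ENNReal.ofReal_lt_top

-- The Taylor series of `exp ((c - r) X)` in `r` has nonnegative terms, and its integrated
-- version is the Taylor series of `f` at `c`.
lemma sub_mem_integrableExpSet_of_differentiableOn_ball (hX : AEMeasurable X μ)
    (hX0 : ∀ᵐ ω ∂μ, X ω ≤ 0) {f : ℂ → ℂ} {c ρ r : ℝ} (hr : 0 ≤ r) (hrρ : r < ρ)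
    (hf : DifferentiableOn ℂ f (Metric.ball (c : ℂ) ρ))
    (hc : c ∈ interior (integrableExpSet X μ)) (hfc : f =ᶠ[𝓝 (c : ℂ)] complexMGF X μ) :
    c - r ∈ integrableExpSet X μ := by
  have hz : (c - r : ℂ) ∈ Metric.ball (c : ℂ) ρ := by simp [abs_of_nonneg hr, hrρ]
  set g : ℕ → Ω → ℝ := fun n ω ↦ (-r * X ω) ^ n / n.factorial * Real.exp (c * X ω) with hg
  have integral_g (n : ℕ) : ((∫ ω, g n ω ∂μ : ℝ) : ℂ) =
      (n.factorial : ℂ)⁻¹ • ((c - r : ℂ) - c) ^ n • iteratedDeriv n f c := by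
    rw [hfc.iteratedDeriv_eq, iteratedDeriv_complexMGF (by simpa using hc),
      ← integral_complex_ofReal, smul_smul, smul_eq_mul, ← integral_const_mul]
    congr 1 with ω
    simp only [hg]
    push_cast
    rw [mul_pow]
    ring
  refine integrable_of_hasSum_of_nonneg (g := g) (by fun_prop) (fun n ↦ ?_) (fun n ↦ ?_) ?_
    (ae_of_all _ fun ω ↦ ?_)
  · convert (integrable_pow_mul_exp_of_mem_interior_integrableExpSet hc n).const_mul
      ((-r) ^ n / n.factorial) using 2 with ω
    simp only [hg]
    ring
  · filter_upwards [hX0] with ω h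
    have : 0 ≤ -r * X ω := by nlinarith
    simp only [hg, Pi.zero_apply]
    positivity
  · rw [← Complex.summable_ofReal]
    exact (Complex.hasSum_taylorSeries_on_ball hf hz).summable.congr fun n ↦ (integral_g n).symm
  · have hexp := NormedSpace.expSeries_div_hasSum_exp (𝔸 := ℝ) (-r * X ω)
    rw [← Real.exp_eq_exp_ℝ] at hexp
    have hsplit : Real.exp ((c - r) * X ω) = Real.exp (-r * X ω) * Real.exp (c * X ω) := by
      rw [← Real.exp_add]
      ring_nf
    rw [hsplit]
    exact hexp.mul_right (Real.exp (c * X ω))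

lemma frequently_ofReal_nhdsNE {p : ℂ → Prop} {t : ℝ} (h : ∀ᶠ x : ℝ in 𝓝 t, p x) :
    ∃ᶠ z in 𝓝[≠] (t : ℂ), p z := by
  have htendsto : Tendsto (fun x : ℝ ↦ (x : ℂ)) (𝓝[≠] t) (𝓝[≠] (t : ℂ)) :=
    Complex.continuous_ofReal.continuousAt.continuousWithinAt.tendsto_nhdsWithin
      fun x hx ↦ by simpa using hx
  exact htendsto.frequently (h.filter_mono nhdsWithin_le_nhds).frequently

lemma eqOn_complexMGF_of_analyticAt {f : ℂ → ℂ} {β b : ℝ}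
    (hβ : Set.Ioi β ⊆ integrableExpSet X μ) (hf : ∀ t : ℝ, β < t → AnalyticAt ℂ f t)
    (hfb : ∀ t : ℝ, b < t → f t = complexMGF X μ t) :
    Set.EqOn f (complexMGF X μ) (Complex.ofReal '' Set.Ioi β) := by
  refine AnalyticOnNhd.eqOn_of_preconnected_of_frequently_eq (z₀ := ((max b β + 1 : ℝ) : ℂ))
    (Set.forall_mem_image.2 hf) (Set.forall_mem_image.2 fun t ht ↦ ?_)
    (isPreconnected_Ioi.image _ Complex.continuous_ofReal.continuousOn)
    (Set.mem_image_of_mem _ (by simp only [Set.mem_Ioi]; linarith [le_max_right b β]))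
    (frequently_ofReal_nhdsNE ?_)
  · exact analyticAt_complexMGF (interior_maximal hβ isOpen_Ioi ht)
  · filter_upwards [lt_mem_nhds (show b < max b β + 1 by linarith [le_max_left b β])] with t ht
    exact hfb t ht

/-- **Landau's theorem** for exponential moments: the abscissa of convergence is a singularity. -/
theorem Ioi_subset_integrableExpSet_of_analyticAt (hX : AEMeasurable X μ)
    (hX0 : ∀ᵐ ω ∂μ, X ω ≤ 0) {f : ℂ → ℂ} {a b : ℝ}
    (hb : Set.Ioi b ⊆ integrableExpSet X μ) (hf : ∀ t : ℝ, a < t → AnalyticAt ℂ f t)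
    (hfb : ∀ t : ℝ, b < t → f t = complexMGF X μ t) :
    Set.Ioi a ⊆ integrableExpSet X μ := by
  by_contra hcon
  obtain ⟨t₀, ht₀, ht₀'⟩ := Set.not_subset.1 hcon
  have hup := isUpperSet_integrableExpSet_of_nonpos hX hX0
  have hne : (integrableExpSet X μ).Nonempty := ⟨b + 1, hb (by simp)⟩
  have hlb : t₀ ∈ lowerBounds (integrableExpSet X μ) := fun s hs ↦
    le_of_not_ge fun h ↦ ht₀' (hup h hs)
  set β := sInf (integrableExpSet X μ)
  have haβ : a < β := lt_of_lt_of_le ht₀ (le_csInf hne hlb)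
  have hβ : Set.Ioi β ⊆ integrableExpSet X μ := fun t ht ↦ by
    obtain ⟨s, hs, hst⟩ := exists_lt_of_csInf_lt hne ht
    exact hup hst.le hs
  have heq := eqOn_complexMGF_of_analyticAt hβ (fun t ht ↦ hf t (haβ.trans ht)) hfb
  obtain ⟨ρ, hρ, hball⟩ := Metric.eventually_nhds_iff_ball.1 (hf β haβ).eventually_analyticAt
  obtain ⟨c, hβc, hcρ⟩ : ∃ c, β < c ∧ c < β + ρ / 4 := exists_between (by linarith)
  have hc : c ∈ interior (integrableExpSet X μ) := interior_maximal hβ isOpen_Ioi hβc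
  have hfc : f =ᶠ[𝓝 (c : ℂ)] complexMGF X μ := by
    refine ((hf c (haβ.trans hβc)).frequently_eq_iff_eventually_eq
      (analyticAt_complexMGF hc)).1 (frequently_ofReal_nhdsNE ?_)
    filter_upwards [lt_mem_nhds hβc] with t ht
    exact heq ⟨t, ht, rfl⟩
  have hfd : DifferentiableOn ℂ f (Metric.ball c (ρ / 2)) := fun z hz ↦ by
    refine (hball z (Metric.ball_subset_ball' ?_ hz)).differentiableAt.differentiableWithinAt
    rw [Complex.dist_eq, ← Complex.ofReal_sub, Complex.norm_real,
      Real.norm_of_nonneg (sub_nonneg.2 hβc.le)]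
    linarith
  have hmem := sub_mem_integrableExpSet_of_differentiableOn_ball hX hX0 (r := ρ / 4)
    (by linarith) (by linarith) hfd hc hfc
  linarith [csInf_le ⟨t₀, hlb⟩ hmem]

end Landau

section PrimeSums

open ArithmeticFunction Complex Nat.Primes

lemma one_lt_norm_prime_cpow (p : Nat.Primes) {w : ℂ} (hw : 0 < w.re) :
    1 < ‖((p : ℕ) : ℂ) ^ w‖ := by
  rw [norm_natCast_cpow_of_pos p.2.pos]
  exact Real.one_lt_rpow (by exact_mod_cast p.2.one_lt) hw

lemma pow_sub_one_ne_zero_of_one_lt_norm {q : ℂ} (hq : 1 < ‖q‖) {k : ℕ} (hk : k ≠ 0) :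
    q ^ k - 1 ≠ 0 := by
  refine sub_ne_zero.2 fun h ↦ (one_lt_pow₀ hq hk).ne' ?_
  rw [← norm_pow, h, norm_one]

lemma LSeries_term_vonMangoldt_prime_pow (p : Nat.Primes) (w : ℂ) (k : ℕ) :
    LSeries.term (fun n ↦ (Λ n : ℂ)) w ((p : ℕ) ^ (k + 1)) =
      Real.log p * (((p : ℕ) : ℂ) ^ w)⁻¹ * (((p : ℕ) : ℂ) ^ w)⁻¹ ^ k := by
  rw [LSeries.term_of_ne_zero (pow_ne_zero _ p.2.ne_zero), vonMangoldt_apply_pow k.succ_ne_zero,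
    vonMangoldt_apply_prime p.2, Nat.cast_pow, ← natCast_cpow_natCast_mul, mul_comm _ w,
    cpow_mul_nat, inv_pow, pow_succ]
  field_simp

lemma hasSum_neg_logDeriv_riemannZeta {w : ℂ} (hw : 1 < w.re) :
    HasSum (fun p : Nat.Primes ↦ (Real.log p : ℂ) / (((p : ℕ) : ℂ) ^ w - 1))
      (-logDeriv riemannZeta w) := by
  have hΛ : HasSum (LSeries.term (fun n ↦ (Λ n : ℂ)) w) (-logDeriv riemannZeta w) := by
    rw [logDeriv_apply, ← neg_div, ← LSeries_vonMangoldt_eq_deriv_riemannZeta_div hw]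
    exact (LSeriesSummable_vonMangoldt hw).hasSum
  have hsupp : Function.support (LSeries.term (fun n ↦ (Λ n : ℂ)) w) ⊆ {n | IsPrimePow n} := by
    intro n hn
    contrapose! hn
    simp [LSeries.term_def, vonMangoldt_eq_zero_iff.2 hn]
  rw [← hasSum_subtype_iff_of_support_subset hsupp] at hΛ
  refine (prodNatEquiv.hasSum_iff.2 hΛ).prod_fiberwise fun p ↦ ?_
  have hp := one_lt_norm_prime_cpow p (w := w) (by linarith)
  have hq0 : ((p : ℕ) : ℂ) ^ w ≠ 0 := norm_pos_iff.1 (by linarith)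
  have hgeom := (hasSum_geometric_of_norm_lt_one (ξ := (((p : ℕ) : ℂ) ^ w)⁻¹)
    (by rw [norm_inv]; exact inv_lt_one_of_one_lt₀ hp)).mul_left
      ((Real.log p : ℂ) * (((p : ℕ) : ℂ) ^ w)⁻¹)
  rw [mul_assoc, ← mul_inv, mul_sub, mul_one, mul_inv_cancel₀ hq0, ← div_eq_mul_inv] at hgeom
  exact hgeom.congr_fun fun k ↦ LSeries_term_vonMangoldt_prime_pow p w k

/-- The coefficients `log p / (p - 1)`, supported on the primes. -/
noncomputable def primeCoeff (n : ℕ) : ℝ := if n.Prime then Real.log n / ((n : ℝ) - 1) else 0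

lemma primeCoeff_nonneg (n : ℕ) : 0 ≤ primeCoeff n := by
  unfold primeCoeff
  split_ifs with h
  · have : (1 : ℝ) < n := by exact_mod_cast h.one_lt
    exact div_nonneg (Real.log_nonneg this.le) (by linarith)
  · exact le_rfl

/-- The contribution of the prime `p` to `primeRemainder w`. -/
noncomputable def primeRemainderTerm (p : Nat.Primes) (w : ℂ) : ℂ :=
  Real.log p * ((((p : ℕ) : ℂ) ^ w)⁻¹ *
    ((((p : ℕ) : ℂ) - 1)⁻¹ - ((((p : ℕ) : ℂ) ^ w) ^ 2 - 1)⁻¹))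

/-- The difference between the Dirichlet series `∑ p, log p / (p - 1) * p ^ (1 - w)` and its
singular part `-ζ'/ζ(w) + ζ'/ζ(2w)`; it converges absolutely for `2 / 5 ≤ re w`. -/
noncomputable def primeRemainder (w : ℂ) : ℂ := ∑' p, primeRemainderTerm p w

lemma norm_inv_mul_inv_sub_inv_le {p t : ℝ} (hp : 2 ≤ p) (ht1 : 3 / 2 ≤ t ^ 2) (htp : t ^ 2 ≤ p)
    (ht0 : 0 < t) {q : ℂ} (hq : t ≤ ‖q‖) :
    ‖q⁻¹ * (((p : ℂ) - 1)⁻¹ - (q ^ 2 - 1)⁻¹)‖ ≤ 5 * (t ^ 3)⁻¹ := by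
  have hp1 : ‖((p : ℂ) - 1)⁻¹‖ ≤ 2 * (t ^ 2)⁻¹ := by
    rw [norm_inv, ← ofReal_one, ← ofReal_sub, norm_real, Real.norm_of_nonneg (by linarith),
      ← div_eq_mul_inv, inv_le_comm₀ (by linarith) (by positivity), inv_div]
    linarith
  have hq1 : ‖(q ^ 2 - 1)⁻¹‖ ≤ 3 * (t ^ 2)⁻¹ := by
    have hsub := norm_sub_norm_le (q ^ 2) 1
    rw [norm_pow, norm_one] at hsub
    have htq : t ^ 2 ≤ ‖q‖ ^ 2 := by gcongr
    rw [norm_inv, ← div_eq_mul_inv, inv_le_comm₀ (by linarith) (by positivity), inv_div]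
    linarith
  calc ‖q⁻¹ * (((p : ℂ) - 1)⁻¹ - (q ^ 2 - 1)⁻¹)‖
      ≤ t⁻¹ * (2 * (t ^ 2)⁻¹ + 3 * (t ^ 2)⁻¹) := by
        rw [norm_mul, norm_inv]
        gcongr
        exact (norm_sub_le _ _).trans (add_le_add hp1 hq1)
    _ = 5 * (t ^ 3)⁻¹ := by
        field_simp
        norm_num

-- Each term is `O(log p * p ^ (-3 * 2 / 5))`, and `3 * 2 / 5 - 1 / 10 = 11 / 10 > 1`.
lemma norm_primeRemainderTerm_le (p : Nat.Primes) {w : ℂ} (hw : 2 / 5 ≤ w.re) :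
    ‖primeRemainderTerm p w‖ ≤ 50 * ((p : ℕ) : ℝ) ^ (-(11 / 10) : ℝ) := by
  have hp2 : (2 : ℝ) ≤ (p : ℕ) := by exact_mod_cast p.2.two_le
  have hp0 : (0 : ℝ) < (p : ℕ) := by linarith
  set t := ((p : ℕ) : ℝ) ^ (2 / 5 : ℝ) with ht
  have ht0 : 0 < t := Real.rpow_pos_of_pos hp0 _
  have ht2 : t ^ 2 = ((p : ℕ) : ℝ) ^ (4 / 5 : ℝ) := by
    rw [ht, ← Real.rpow_natCast, ← Real.rpow_mul hp0.le]
    norm_num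
  have ht5 : t ^ 5 = ((p : ℕ) : ℝ) ^ 2 := by
    rw [ht, ← Real.rpow_natCast, ← Real.rpow_mul hp0.le, ← Real.rpow_natCast]
    norm_num
  have ht1 : 5 / 4 ≤ t := by
    by_contra! h
    have : t ^ 5 < (5 / 4) ^ 5 := by gcongr
    nlinarith
  have hq : t ≤ ‖((p : ℕ) : ℂ) ^ w‖ := by
    rw [norm_natCast_cpow_of_pos p.2.pos]
    exact Real.rpow_le_rpow_of_exponent_le (by linarith) hw
  have hlog : Real.log (p : ℕ) ≤ 10 * ((p : ℕ) : ℝ) ^ (1 / 10 : ℝ) := by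
    have := Real.log_le_rpow_div hp0.le (show (0 : ℝ) < 1 / 10 by norm_num)
    linarith
  have hfactor := norm_inv_mul_inv_sub_inv_le hp2 (by nlinarith)
    (ht2.trans_le (Real.rpow_le_self_of_one_le (by linarith) (by norm_num))) ht0 hq
  rw [ofReal_natCast] at hfactor
  calc ‖primeRemainderTerm p w‖
      ≤ 10 * ((p : ℕ) : ℝ) ^ (1 / 10 : ℝ) * (5 * (t ^ 3)⁻¹) := by
        rw [primeRemainderTerm, norm_mul, norm_real,
          Real.norm_of_nonneg (Real.log_nonneg (by linarith))]
        gcongr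
    _ = 50 * (((p : ℕ) : ℝ) ^ (1 / 10 : ℝ) * (t ^ 3)⁻¹) := by ring
    _ = 50 * ((p : ℕ) : ℝ) ^ (-(11 / 10) : ℝ) := by
        rw [ht, ← Real.rpow_natCast, ← Real.rpow_mul hp0.le, ← Real.rpow_neg hp0.le,
          ← Real.rpow_add hp0]
        norm_num

lemma summable_primeRemainder_bound :
    Summable fun p : Nat.Primes ↦ 50 * ((p : ℕ) : ℝ) ^ (-(11 / 10) : ℝ) :=
  (Nat.Primes.summable_rpow.mpr (by norm_num)).mul_left _

lemma hasSum_primeRemainder {w : ℂ} (hw : 2 / 5 ≤ w.re) :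
    HasSum (fun p ↦ primeRemainderTerm p w) (primeRemainder w) :=
  (summable_primeRemainder_bound.of_norm_bounded fun p ↦ norm_primeRemainderTerm_le p hw).hasSum

lemma exists_norm_primeRemainder_le : ∃ C, ∀ w : ℂ, 2 / 5 ≤ w.re → ‖primeRemainder w‖ ≤ C :=
  ⟨_, fun _ hw ↦ tsum_of_norm_bounded summable_primeRemainder_bound.hasSum
    fun p ↦ norm_primeRemainderTerm_le p hw⟩

lemma differentiableAt_primeRemainderTerm (p : Nat.Primes) {w : ℂ} (hw : 0 < w.re) :
    DifferentiableAt ℂ (primeRemainderTerm p) w := by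
  have hq := one_lt_norm_prime_cpow p hw
  have hpow : DifferentiableAt ℂ (fun w : ℂ ↦ ((p : ℕ) : ℂ) ^ w) w :=
    differentiableAt_id.const_cpow (Or.inl (by exact_mod_cast p.2.ne_zero))
  unfold primeRemainderTerm
  exact ((hpow.inv (norm_pos_iff.1 (by linarith))).mul ((differentiableAt_const _).sub
    (((hpow.pow 2).sub_const 1).inv
      (pow_sub_one_ne_zero_of_one_lt_norm hq two_ne_zero)))).const_mul _

lemma analyticAt_primeRemainder {w : ℂ} (hw : 2 / 5 < w.re) : AnalyticAt ℂ primeRemainder w := by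
  have hopen : IsOpen {w : ℂ | 2 / 5 < w.re} := isOpen_lt continuous_const continuous_re
  refine (Complex.differentiableOn_tsum_of_summable_norm summable_primeRemainder_bound
    (fun p w hw ↦ ?_) hopen fun p w hw ↦ ?_).analyticAt (hopen.mem_nhds hw)
  · exact (differentiableAt_primeRemainderTerm p
      (lt_trans (by norm_num) hw)).differentiableWithinAt
  · exact norm_primeRemainderTerm_le p (le_of_lt hw)

lemma primeRemainder_one : primeRemainder 1 = -logDeriv riemannZeta 2 := by
  refine (hasSum_primeRemainder (w := 1) (by norm_num)).unique ?_
  convert hasSum_neg_logDeriv_riemannZeta (w := 2) (by norm_num) using 2 with p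
  have hp : 1 < ‖((p : ℕ) : ℂ)‖ := by simpa using one_lt_norm_prime_cpow p (w := 1) (by simp)
  have hp0 : ((p : ℕ) : ℂ) ≠ 0 := norm_pos_iff.1 (by linarith)
  have hp1 : ((p : ℕ) : ℂ) - 1 ≠ 0 := by
    simpa using pow_sub_one_ne_zero_of_one_lt_norm hp one_ne_zero
  have hp2 : ((p : ℕ) : ℂ) ^ 2 - 1 ≠ 0 := pow_sub_one_ne_zero_of_one_lt_norm hp two_ne_zero
  simp only [primeRemainderTerm, cpow_one, cpow_ofNat]
  field_simp
  ring

lemma LSeries_term_primeCoeff_prime (p : Nat.Primes) {w : ℂ} (hw : 0 < w.re) :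
    LSeries.term (fun n ↦ (primeCoeff n : ℂ)) (w - 1) p =
      Real.log p / (((p : ℕ) : ℂ) ^ w - 1) + -(Real.log p / (((p : ℕ) : ℂ) ^ (2 * w) - 1))
        + primeRemainderTerm p w := by
  have hq := one_lt_norm_prime_cpow p hw
  have hp0 : ((p : ℕ) : ℂ) ≠ 0 := by exact_mod_cast p.2.ne_zero
  have hp1 : ((p : ℕ) : ℂ) - 1 ≠ 0 := sub_ne_zero.mpr (by exact_mod_cast p.2.one_lt.ne')
  have hpow : ((p : ℕ) : ℂ) ^ (2 * w) = (((p : ℕ) : ℂ) ^ w) ^ 2 := by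
    rw [mul_comm, ← cpow_mul_ofNat]
  simp only [LSeries.term_of_ne_zero p.2.ne_zero, primeCoeff, if_pos p.2, primeRemainderTerm,
    hpow, cpow_sub _ _ hp0, cpow_one]
  set q := ((p : ℕ) : ℂ) ^ w
  have hq0 : q ≠ 0 := norm_pos_iff.1 (by linarith)
  have hq1 : q - 1 ≠ 0 := by simpa using pow_sub_one_ne_zero_of_one_lt_norm hq one_ne_zero
  have hq2 : q ^ 2 - 1 ≠ 0 := pow_sub_one_ne_zero_of_one_lt_norm hq two_ne_zero
  push_cast
  field_simp
  ring

theorem hasSum_primeCoeff {w : ℂ} (hw : 1 < w.re) :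
    HasSum (LSeries.term (fun n ↦ (primeCoeff n : ℂ)) (w - 1))
      (-logDeriv riemannZeta w + logDeriv riemannZeta (2 * w) + primeRemainder w) := by
  have hsupp : Function.support (LSeries.term (fun n ↦ (primeCoeff n : ℂ)) (w - 1)) ⊆
      {n | Nat.Prime n} := by
    intro n hn
    contrapose! hn
    simp [LSeries.term_def, primeCoeff, show ¬ n.Prime from hn]
  rw [← hasSum_subtype_iff_of_support_subset hsupp]
  have hsum := ((hasSum_neg_logDeriv_riemannZeta hw).add
    (hasSum_neg_logDeriv_riemannZeta (w := 2 * w) (by simp; linarith)).neg).add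
    (hasSum_primeRemainder (w := w) (by linarith))
  rw [neg_neg] at hsum
  exact hsum.congr_fun fun p ↦ LSeries_term_primeCoeff_prime p (by linarith)

end PrimeSums

section Mellin

open Complex MeasureTheory ProbabilityTheory Set

lemma rpow_mul_cpow_neg_add_one {x : ℝ} (hx : 0 < x) (a : ℝ) (s : ℂ) :
    ((x ^ a : ℝ) : ℂ) * (x : ℂ) ^ (-(s + 1)) = (x : ℂ) ^ (-(s - a + 1)) := by
  rw [ofReal_cpow hx.le, ← cpow_add _ _ (ofReal_ne_zero.2 hx.ne')]
  ring_nf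

lemma integral_rpow_mul_cpow {a : ℝ} {s : ℂ} (hs : a < s.re) :
    ∫ x in Ioi (1 : ℝ), ((x ^ a : ℝ) : ℂ) * (x : ℂ) ^ (-(s + 1)) = 1 / (s - a) := by
  rw [setIntegral_congr_fun measurableSet_Ioi
      fun x hx ↦ rpow_mul_cpow_neg_add_one (zero_lt_one.trans hx) a s,
    integral_Ioi_cpow_of_lt (by simpa using hs) one_pos, ofReal_one, one_cpow]
  rw [show -(s - a + 1) + 1 = -(s - a) by ring, neg_div_neg_eq]

lemma integrableOn_mul_cpow {f : ℝ → ℝ} (hm : Measurable f) {K r : ℝ}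
    (hb : ∀ x, 1 < x → |f x| ≤ K * x ^ r) {s : ℂ} (hs : r < s.re) :
    IntegrableOn (fun x : ℝ ↦ (f x : ℂ) * (x : ℂ) ^ (-(s + 1))) (Ioi 1) := by
  refine Integrable.mono' (g := fun x ↦ K * x ^ (r - s.re - 1))
    ((integrableOn_Ioi_rpow_of_lt (by linarith) one_pos).const_mul K) ?_ ?_
  · exact AEStronglyMeasurable.mul (by fun_prop)
      (measurable_ofReal.pow_const _).aestronglyMeasurable
  · filter_upwards [ae_restrict_mem measurableSet_Ioi] with x hx
    have hx0 : 0 < x := zero_lt_one.trans hx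
    rw [norm_mul, norm_cpow_eq_rpow_re_of_pos hx0, norm_real, Real.norm_eq_abs]
    calc |f x| * x ^ (-(s + 1)).re ≤ K * x ^ r * x ^ (-(s + 1)).re := by gcongr; exact hb x hx
      _ = K * x ^ (r - s.re - 1) := by
        rw [mul_assoc, ← Real.rpow_add hx0, neg_re, add_re, one_re]
        ring_nf

/-- The measure `H x dx / x` on `(1, ∞)`. It is used only where `H` is nonnegative;
`ENNReal.ofReal` truncates `H` elsewhere. -/
noncomputable def mellinMeasure (H : ℝ → ℝ) : Measure ℝ :=
  (volume.restrict (Ioi 1)).withDensity fun x ↦ ENNReal.ofReal (H x / x)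

/-- The Mellin transform `∫ x in (1, ∞), H x * x ^ (-s - 1)` of a nonnegative function, written
as the moment generating function of `-log x` under `mellinMeasure H`. -/
noncomputable def mellinMGF (H : ℝ → ℝ) : ℂ → ℂ :=
  complexMGF (fun x ↦ -Real.log x) (mellinMeasure H)

/-- The set of real `s` at which `mellinMGF H` converges absolutely. -/
abbrev mellinSet (H : ℝ → ℝ) : Set ℝ :=
  integrableExpSet (fun x ↦ -Real.log x) (mellinMeasure H)

variable {H : ℝ → ℝ}

lemma ae_neg_log_nonpos (H : ℝ → ℝ) : ∀ᵐ x ∂(mellinMeasure H), -Real.log x ≤ 0 := by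
  refine (withDensity_absolutelyContinuous _ _).ae_le ?_
  filter_upwards [ae_restrict_mem measurableSet_Ioi] with x hx
  exact neg_nonpos.2 (Real.log_nonneg (le_of_lt hx))

lemma toReal_ofReal_smul_eqOn (h0 : ∀ x, 1 < x → 0 ≤ H x) {E : Type*} [NormedAddCommGroup E]
    [NormedSpace ℝ E] (g : ℝ → E) :
    EqOn (fun x ↦ (ENNReal.ofReal (H x / x)).toReal • g x) (fun x ↦ (H x / x) • g x) (Ioi 1) := by
  intro x hx
  have hx0 : 0 ≤ x := (zero_lt_one.trans hx).le
  beta_reduce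
  rw [ENNReal.toReal_ofReal (div_nonneg (h0 x hx) hx0)]

lemma integral_mellinMeasure (hm : Measurable H) (h0 : ∀ x, 1 < x → 0 ≤ H x) {E : Type*}
    [NormedAddCommGroup E] [NormedSpace ℝ E] (g : ℝ → E) :
    ∫ x, g x ∂(mellinMeasure H) = ∫ x in Ioi 1, (H x / x) • g x := by
  rw [mellinMeasure, integral_withDensity_eq_integral_toReal_smul (by fun_prop) (by simp)]
  exact setIntegral_congr_fun measurableSet_Ioi (toReal_ofReal_smul_eqOn h0 g)

lemma integrable_mellinMeasure_iff (hm : Measurable H) (h0 : ∀ x, 1 < x → 0 ≤ H x) {E : Type*}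
    [NormedAddCommGroup E] [NormedSpace ℝ E] (g : ℝ → E) :
    Integrable g (mellinMeasure H) ↔ IntegrableOn (fun x ↦ (H x / x) • g x) (Ioi 1) := by
  rw [mellinMeasure, integrable_withDensity_iff_integrable_smul' (by fun_prop) (by simp),
    ← IntegrableOn]
  exact integrableOn_congr_fun (toReal_ofReal_smul_eqOn h0 g) measurableSet_Ioi

lemma cexp_mul_neg_log {x : ℝ} (hx : 0 < x) (s : ℂ) :
    cexp (s * ((-Real.log x : ℝ) : ℂ)) = x * (x : ℂ) ^ (-(s + 1)) := by
  have hx0 : (x : ℂ) ≠ 0 := ofReal_ne_zero.2 hx.ne'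
  nth_rw 1 [← cpow_one (x : ℂ)]
  rw [← cpow_add _ _ hx0, cpow_def_of_ne_zero hx0, ofReal_neg, ofReal_log hx.le]
  ring_nf

lemma mellinMGF_eq (hm : Measurable H) (h0 : ∀ x, 1 < x → 0 ≤ H x) (s : ℂ) :
    mellinMGF H s = ∫ x in Ioi (1 : ℝ), (H x : ℂ) * (x : ℂ) ^ (-(s + 1)) := by
  rw [mellinMGF, complexMGF, integral_mellinMeasure hm h0]
  refine setIntegral_congr_fun measurableSet_Ioi fun x hx ↦ ?_
  have hx0 : 0 < x := zero_lt_one.trans hx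
  have hx0' : (x : ℂ) ≠ 0 := ofReal_ne_zero.2 hx0.ne'
  rw [cexp_mul_neg_log hx0, real_smul]
  push_cast
  field_simp

lemma Ioi_subset_mellinSet (hm : Measurable H) (h0 : ∀ x, 1 < x → 0 ≤ H x) {K r : ℝ}
    (hb : ∀ x, 1 < x → H x ≤ K * x ^ r) : Ioi r ⊆ mellinSet H := by
  intro t ht
  have hint := (integrableOn_mul_cpow hm (K := K) (r := r)
    (fun x hx ↦ by rw [abs_of_nonneg (h0 x hx)]; exact hb x hx) (s := (t : ℂ)) ht).norm
  rw [mellinSet, integrableExpSet, mem_ofPred_eq, integrable_mellinMeasure_iff hm h0]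
  refine IntegrableOn.congr_fun hint (fun x hx ↦ ?_) measurableSet_Ioi
  have hx0 : 0 < x := zero_lt_one.trans hx
  rw [norm_mul, norm_real, Real.norm_of_nonneg (h0 x hx), smul_eq_mul, ← Real.norm_of_nonneg
    (Real.exp_pos (t * -Real.log x)).le, ← norm_real, ofReal_exp, ofReal_mul,
    cexp_mul_neg_log hx0, norm_mul, norm_real, Real.norm_of_nonneg hx0.le]
  field_simp

lemma analyticOnNhd_mellinMGF {r : ℝ} (hr : Ioi r ⊆ mellinSet H) :
    AnalyticOnNhd ℂ (mellinMGF H) {s | r < s.re} :=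
  analyticOnNhd_complexMGF.mono fun _ hs ↦ interior_maximal hr isOpen_Ioi hs

-- Differentiate `∫ x in (1, ∞), x ^ (-s - 1) = 1 / s` in `s`.
lemma integral_log_mul_cpow {s : ℂ} (hs : 0 < s.re) :
    ∫ x in Ioi (1 : ℝ), (Real.log x : ℂ) * (x : ℂ) ^ (-(s + 1)) = 1 / s ^ 2 := by
  have hset : Ioi (0 : ℝ) ⊆ mellinSet (fun _ ↦ 1) :=
    Ioi_subset_mellinSet measurable_const (by simp) (K := 1) (by simp)
  have hderiv : HasDerivAt (mellinMGF fun _ ↦ 1) _ s :=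
    hasDerivAt_complexMGF (interior_maximal hset isOpen_Ioi hs)
  have hderiv_inv : HasDerivAt (mellinMGF fun _ ↦ 1) (-(s ^ 2)⁻¹) s := by
    refine (hasDerivAt_inv (ne_zero_of_re_pos hs)).congr_of_eventuallyEq ?_
    filter_upwards [(isOpen_re_gt 0).mem_nhds hs] with z hz
    rw [mellinMGF_eq measurable_const (by simp)]
    simpa using integral_rpow_mul_cpow (a := 0) hz
  rw [one_div, ← neg_eq_iff_eq_neg.2 (hderiv.unique hderiv_inv),
    integral_mellinMeasure measurable_const (by simp), ← integral_neg]
  refine setIntegral_congr_fun measurableSet_Ioi fun x hx ↦ ?_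
  have hx0 : 0 < x := zero_lt_one.trans hx
  have hx0' : (x : ℂ) ≠ 0 := ofReal_ne_zero.2 hx0.ne'
  rw [cexp_mul_neg_log hx0, real_smul]
  push_cast
  field_simp

lemma integral_floor_mul_cpow {s : ℂ} (hs : 1 < s.re) :
    ∫ x in Ioi (1 : ℝ), (⌊x⌋₊ : ℂ) * (x : ℂ) ^ (-(s + 1)) = riemannZeta s / s := by
  rw [eq_div_iff (ne_zero_of_one_lt_re hs), mul_comm, ← LSeries_one_eq_riemannZeta hs,
    LSeries_eq_mul_integral 1 zero_le_one hs (LSeriesSummable_one_iff.mpr hs)]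
  · simp
  · simp only [Pi.one_apply, Finset.sum_const, Nat.card_Icc, add_tsub_cancel_right,
      nsmul_eq_mul, mul_one, Real.rpow_one]
    exact Asymptotics.isBigO_of_le _ fun n ↦ by simp

lemma mellinMGF_fract {s : ℂ} (hs : 1 < s.re) :
    mellinMGF Int.fract s = 1 / (s - 1) - riemannZeta s / s := by
  have hid : IntegrableOn (fun x : ℝ ↦ (x : ℂ) * (x : ℂ) ^ (-(s + 1))) (Ioi 1) :=
    integrableOn_mul_cpow (f := fun x ↦ x) measurable_id (K := 1) (r := 1)
      (fun x hx ↦ by rw [abs_of_pos (by linarith)]; simp) hs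
  have hfloor : IntegrableOn (fun x : ℝ ↦ (⌊x⌋₊ : ℂ) * (x : ℂ) ^ (-(s + 1))) (Ioi 1) := by
    simpa [IntegrableOn] using integrableOn_mul_cpow (f := fun x ↦ (⌊x⌋₊ : ℝ)) (by fun_prop)
      (K := 1) (r := 1) (fun x hx ↦ by
        rw [abs_of_nonneg (by positivity), Real.rpow_one, one_mul]
        exact Nat.floor_le (by linarith)) hs
  have integral_id := integral_rpow_mul_cpow (a := 1) hs
  simp only [Real.rpow_one, ofReal_one] at integral_id
  rw [mellinMGF_eq measurable_fract (fun x _ ↦ Int.fract_nonneg x),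
    ← integral_floor_mul_cpow hs, ← integral_id, ← integral_sub hid hfloor]
  refine setIntegral_congr_fun measurableSet_Ioi fun x hx ↦ ?_
  have hx0 : 0 < x := zero_lt_one.trans hx
  simp only [← Int.self_sub_floor, ← natCast_floor_eq_intCast_floor hx0.le]
  push_cast
  ring

lemma riemannZeta₁_eq_fract {s : ℂ} (hs : 0 < s.re) :
    riemannZeta₁ s = s - s * (s - 1) * mellinMGF Int.fract s := by
  have hset : Ioi (0 : ℝ) ⊆ mellinSet Int.fract :=
    Ioi_subset_mellinSet measurable_fract (fun x _ ↦ Int.fract_nonneg x) (K := 1)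
      (fun x _ ↦ by simpa using (Int.fract_lt_one x).le)
  have hright : AnalyticOnNhd ℂ (fun s ↦ s - s * (s - 1) * mellinMGF Int.fract s)
      {z : ℂ | 0 < z.re} :=
    analyticOnNhd_id.sub ((analyticOnNhd_id.mul (analyticOnNhd_id.sub analyticOnNhd_const)).mul
      (analyticOnNhd_mellinMGF hset))
  have hleft : AnalyticOnNhd ℂ riemannZeta₁ {z : ℂ | 0 < z.re} := fun z _ ↦
    differentiable_riemannZeta₁.analyticAt z
  refine hleft.eqOn_of_preconnected_of_eventuallyEq hright
    (convex_halfSpace_re_gt 0).isPreconnected (z₀ := 2) (by simp) ?_ hs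
  filter_upwards [(isOpen_re_gt 1).mem_nhds (show (1 : ℝ) < (2 : ℂ).re by norm_num)] with z hz
  have hz0 : z ≠ 0 := ne_zero_of_one_lt_re hz
  have hz1 : z ≠ 1 := by
    rintro rfl
    exact lt_irrefl _ hz
  have hz1' : z - 1 ≠ 0 := sub_ne_zero.2 hz1
  rw [mellinMGF_fract hz, riemannZeta_eq_inv_sub_mul hz1]
  field_simp
  ring

end Mellin

section AnalyticOrder

open Complex Set

lemma analyticAt_logDeriv {f : ℂ → ℂ} {z : ℂ} (hf : AnalyticAt ℂ f z) (h0 : f z ≠ 0) :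
    AnalyticAt ℂ (logDeriv f) z :=
  hf.deriv.div hf h0

lemma analyticOrderAt_ne_top_of_differentiable {f : ℂ → ℂ} (hf : Differentiable ℂ f) {z₁ : ℂ}
    (hz₁ : f z₁ ≠ 0) (z : ℂ) : analyticOrderAt f z ≠ ⊤ := by
  have hfa : AnalyticOnNhd ℂ f univ := fun z _ ↦ hf.analyticAt z
  refine hfa.analyticOrderAt_ne_top_of_isPreconnected isPreconnected_univ (mem_univ z₁)
    (mem_univ z) ?_
  rw [((hf.analyticAt z₁).analyticOrderAt_eq_zero).2 hz₁]
  exact ENat.zero_ne_top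

-- At a zero of order `n` the derivative would vanish to order `n - 1` and to order at least `n`.
lemma ne_zero_of_deriv_eventuallyEq_mul {f a : ℂ → ℂ} {z : ℂ} (hf : AnalyticAt ℂ f z)
    (hz : analyticOrderAt f z ≠ ⊤) (ha : AnalyticAt ℂ a z) (h : deriv f =ᶠ[𝓝 z] a * f) :
    f z ≠ 0 := by
  intro h0
  have horder : analyticOrderAt a z + analyticOrderAt f z + 1 = analyticOrderAt f z := by
    simpa only [h0, sub_zero, analyticOrderAt_congr h, analyticOrderAt_mul ha hf] using
      hf.analyticOrderAt_deriv_add_one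
  have hle : analyticOrderAt f z + 1 ≤ analyticOrderAt f z :=
    horder.le.trans' (by gcongr; exact le_add_self)
  exact (ENat.add_one_le_iff hz).1 hle |>.false

lemma tendsto_sub_mul_logDeriv {f : ℂ → ℂ} {z : ℂ} (hf : AnalyticAt ℂ f z)
    (hz : analyticOrderAt f z ≠ ⊤) :
    Tendsto (fun w ↦ (w - z) * logDeriv f w) (𝓝[≠] z) (𝓝 (analyticOrderNatAt f z)) := by
  obtain ⟨g, hg, hg0, hfg⟩ := hf.analyticOrderAt_ne_top.1 hz
  set n := analyticOrderNatAt f z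
  have hlim : Tendsto (fun w ↦ (n : ℂ) + (w - z) * logDeriv g w) (𝓝 z) (𝓝 n) := by
    have hcont : ContinuousAt (fun w ↦ (n : ℂ) + (w - z) * logDeriv g w) z :=
      continuousAt_const.add ((continuousAt_id.sub continuousAt_const).mul
        (analyticAt_logDeriv hg hg0).continuousAt)
    simpa using hcont.tendsto
  refine (hlim.mono_left nhdsWithin_le_nhds).congr' ?_
  filter_upwards [(logDeriv_congr_nhds hfg).filter_mono nhdsWithin_le_nhds,
    hg.eventually_analyticAt.filter_mono nhdsWithin_le_nhds,
    (hg.continuousAt.eventually_ne hg0).filter_mono nhdsWithin_le_nhds,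
    self_mem_nhdsWithin] with w hw hgw hgw0 hwz
  have hwz' : w - z ≠ 0 := sub_ne_zero.2 hwz
  have hpow : logDeriv (fun w ↦ (w - z) ^ n) w = n / (w - z) := by
    rw [logDeriv_fun_pow (by fun_prop), logDeriv_apply, deriv_sub_const, deriv_id'', mul_one_div]
  simp only [smul_eq_mul] at hw
  rw [hw, logDeriv_mul (f := fun w ↦ (w - z) ^ n) w (pow_ne_zero n hwz') hgw0 (by fun_prop)
    hgw.differentiableAt, hpow]
  field_simp

end AnalyticOrder

section PrimeDelta

open Complex MeasureTheory ProbabilityTheory Set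

lemma riemannZeta₁_ne_zero_of_one_le_re {s : ℂ} (hs : 1 ≤ s.re) : riemannZeta₁ s ≠ 0 := by
  rcases eq_or_ne s 1 with rfl | h
  · simp
  · have hζ := riemannZeta_ne_zero_of_one_le_re hs
    rw [riemannZeta_eq_inv_sub_mul h] at hζ
    exact right_ne_zero_of_mul hζ

lemma riemannZeta₁_ofReal_ne_zero {t : ℝ} (ht : 0 < t) : riemannZeta₁ t ≠ 0 := by
  rcases le_or_gt 1 t with h | h
  · exact riemannZeta₁_ne_zero_of_one_le_re (by simpa using h)
  · rw [riemannZeta₁_eq_fract (by simpa using ht), mellinMGF, complexMGF_ofReal]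
    set m := mgf (fun x ↦ -Real.log x) (mellinMeasure Int.fract) t
    have hm : 0 ≤ m := mgf_nonneg
    have hpos : 0 < t - t * (t - 1) * m := by
      nlinarith [mul_nonneg (mul_nonneg ht.le (sub_nonneg.2 h.le)) hm]
    exact_mod_cast hpos.ne'

lemma analyticOrderAt_riemannZeta₁_ne_top (z : ℂ) : analyticOrderAt riemannZeta₁ z ≠ ⊤ :=
  analyticOrderAt_ne_top_of_differentiable differentiable_riemannZeta₁ (z₁ := 1) (by simp) z

lemma logDeriv_riemannZeta_eq {s : ℂ} (hs : s ≠ 1) (h0 : riemannZeta₁ s ≠ 0) :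
    logDeriv riemannZeta s = logDeriv riemannZeta₁ s - 1 / (s - 1) := by
  have hs' : s - 1 ≠ 0 := sub_ne_zero.2 hs
  have hζ : riemannZeta =ᶠ[𝓝 s] fun z ↦ riemannZeta₁ z / (z - 1) := by
    filter_upwards [isOpen_ne.mem_nhds hs] with z hz
    rw [riemannZeta_eq_inv_sub_mul hz, div_eq_inv_mul]
  rw [(logDeriv_congr_nhds hζ).eq_of_nhds, logDeriv_div s h0 hs' (differentiable_riemannZeta₁ s)
    (by fun_prop), logDeriv_apply fun z ↦ z - 1]
  simp

lemma analyticAt_logDeriv_riemannZeta {s : ℂ} (hs : 1 < s.re) :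
    AnalyticAt ℂ (logDeriv riemannZeta) s := by
  have hs1 : s ≠ 1 := by rintro rfl; simp at hs
  have hd : DifferentiableOn ℂ riemannZeta {1}ᶜ := fun z hz ↦
    (differentiableAt_riemannZeta hz).differentiableWithinAt
  exact analyticAt_logDeriv (hd.analyticAt (isOpen_compl_singleton.mem_nhds hs1))
    (riemannZeta_ne_zero_of_one_le_re hs.le)

/-- The difference `γ + ∑_{p ≤ x} log p / (p - 1) - log x`, whose value just below the prime
`p_{r+1}` has the sign of `γ_r - γ_{r+1}`. -/
noncomputable def primeDelta (x : ℝ) : ℝ :=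
  Real.eulerMascheroniConstant + ∑ n ∈ Finset.Icc 1 ⌊x⌋₊, primeCoeff n - Real.log x

lemma measurable_sum_Icc_floor (a : ℕ → ℝ) :
    Measurable fun x : ℝ ↦ ∑ n ∈ Finset.Icc 1 ⌊x⌋₊, a n :=
  (measurable_of_countable fun m : ℕ ↦ ∑ n ∈ Finset.Icc 1 m, a n).comp Nat.measurable_floor

lemma measurable_primeDelta : Measurable primeDelta :=
  ((measurable_sum_Icc_floor _).const_add _).sub Real.measurable_log

lemma primeCoeff_le_one (n : ℕ) : primeCoeff n ≤ 1 := by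
  unfold primeCoeff
  split_ifs with h
  · have hn : (1 : ℝ) < n := by exact_mod_cast h.one_lt
    rw [div_le_one (by linarith)]
    exact Real.log_le_sub_one_of_pos (by linarith)
  · exact zero_le_one

lemma sum_primeCoeff_le (m : ℕ) : ∑ n ∈ Finset.Icc 1 m, primeCoeff n ≤ m :=
  (Finset.sum_le_sum fun n _ ↦ primeCoeff_le_one n).trans (by simp)

lemma abs_sum_primeCoeff_floor_le {x : ℝ} (hx : 1 < x) :
    |∑ n ∈ Finset.Icc 1 ⌊x⌋₊, primeCoeff n| ≤ 1 * x ^ (1 : ℝ) := by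
  rw [abs_of_nonneg (Finset.sum_nonneg fun n _ ↦ primeCoeff_nonneg n), Real.rpow_one, one_mul]
  exact (sum_primeCoeff_le _).trans (Nat.floor_le (by linarith))

lemma abs_log_le_rpow_one {x : ℝ} (hx : 1 < x) : |Real.log x| ≤ 1 * x ^ (1 : ℝ) := by
  rw [abs_of_nonneg (Real.log_nonneg hx.le), Real.rpow_one, one_mul]
  linarith [Real.log_le_sub_one_of_pos (by linarith : 0 < x)]

lemma abs_primeDelta_le {x : ℝ} (hx : 1 < x) :
    |primeDelta x| ≤ (|Real.eulerMascheroniConstant| + 2) * x ^ (1 : ℝ) := by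
  have hsum := abs_sum_primeCoeff_floor_le hx
  have hlog := abs_log_le_rpow_one hx
  have hconst : |Real.eulerMascheroniConstant| ≤ |Real.eulerMascheroniConstant| * x ^ (1 : ℝ) :=
    le_mul_of_one_le_right (abs_nonneg _) (by simpa using hx.le)
  calc |primeDelta x|
      ≤ |Real.eulerMascheroniConstant| + |∑ n ∈ Finset.Icc 1 ⌊x⌋₊, primeCoeff n| + |Real.log x| :=
        (abs_sub _ _).trans (by gcongr; exact abs_add_le _ _)
    _ ≤ _ := by linarith

/-- `deltaTransform` without its term `ζ₁'/ζ₁`; analytic on `Re s > -1/2`. -/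
noncomputable def deltaRegular (s : ℂ) : ℂ :=
  Real.eulerMascheroniConstant + logDeriv riemannZeta (2 * (s + 1)) + primeRemainder (s + 1)

/-- `s` times the Mellin transform of `primeDelta`. -/
noncomputable def deltaTransform (s : ℂ) : ℂ :=
  deltaRegular s - logDeriv riemannZeta₁ (s + 1)

lemma analyticAt_deltaRegular {s : ℂ} (hs : -1 / 2 < s.re) : AnalyticAt ℂ deltaRegular s := by
  have hζ : AnalyticAt ℂ (logDeriv riemannZeta) (2 * (s + 1)) :=
    analyticAt_logDeriv_riemannZeta (by simp; linarith)
  have hR : AnalyticAt ℂ primeRemainder (s + 1) := analyticAt_primeRemainder (by simp; linarith)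
  exact (analyticAt_const.add
    (AnalyticAt.fun_comp (f := fun s : ℂ ↦ 2 * (s + 1)) hζ (by fun_prop))).add
    (AnalyticAt.fun_comp (f := fun s : ℂ ↦ s + 1) hR (by fun_prop))

lemma analyticAt_deltaTransform {s : ℂ} (hs : -1 / 2 < s.re) (h0 : riemannZeta₁ (s + 1) ≠ 0) :
    AnalyticAt ℂ deltaTransform s :=
  (analyticAt_deltaRegular hs).sub (AnalyticAt.fun_comp (f := fun s : ℂ ↦ s + 1)
    (analyticAt_logDeriv (differentiable_riemannZeta₁.analyticAt _) h0) (by fun_prop))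

lemma deltaTransform_zero : deltaTransform 0 = 0 := by
  rw [deltaTransform, deltaRegular, zero_add, mul_one, primeRemainder_one,
    logDeriv_apply riemannZeta₁, riemannZeta₁_one, deriv_riemannZeta₁_one]
  ring

lemma LSeriesHasSum_primeCoeff {s : ℂ} (hs : 0 < s.re) :
    LSeriesHasSum (fun n ↦ (primeCoeff n : ℂ)) s (-logDeriv riemannZeta (s + 1) +
      logDeriv riemannZeta (2 * (s + 1)) + primeRemainder (s + 1)) := by
  have h := hasSum_primeCoeff (w := s + 1) (by simpa using hs)
  rwa [add_sub_cancel_right] at h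

lemma integral_sum_primeCoeff_mul_cpow {s : ℂ} (hs : 1 < s.re) :
    ∫ x in Ioi (1 : ℝ), ((∑ n ∈ Finset.Icc 1 ⌊x⌋₊, primeCoeff n : ℝ) : ℂ) *
      (x : ℂ) ^ (-(s + 1)) = LSeries (fun n ↦ (primeCoeff n : ℂ)) s / s := by
  have hs0 : s ≠ 0 := ne_zero_of_one_lt_re hs
  rw [LSeries_eq_mul_integral _ zero_le_one hs
    (LSeriesHasSum_primeCoeff (zero_lt_one.trans hs)).LSeriesSummable, mul_div_cancel_left₀ _ hs0]
  · simp
  · refine Asymptotics.isBigO_of_le _ fun n ↦ ?_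
    rw [← ofReal_sum, norm_real, Real.rpow_one, Real.norm_of_nonneg
      (Finset.sum_nonneg fun n _ ↦ primeCoeff_nonneg n), Real.norm_of_nonneg (by positivity)]
    exact sum_primeCoeff_le n

lemma integral_primeDelta {s : ℂ} (hs : 1 < s.re) :
    ∫ x in Ioi (1 : ℝ), (primeDelta x : ℂ) * (x : ℂ) ^ (-(s + 1)) = deltaTransform s / s := by
  have hs0 : s ≠ 0 := ne_zero_of_one_lt_re hs
  have hs_pos : 0 < s.re := zero_lt_one.trans hs
  have hconst : ∫ x in Ioi (1 : ℝ), ((Real.eulerMascheroniConstant : ℝ) : ℂ) *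
      (x : ℂ) ^ (-(s + 1)) = Real.eulerMascheroniConstant / s := by
    have h := integral_rpow_mul_cpow (a := 0) hs_pos
    simp only [Real.rpow_zero, ofReal_one, one_mul, ofReal_zero, sub_zero] at h
    rw [integral_const_mul, h, mul_one_div]
  have iconst := integrableOn_mul_cpow (f := fun _ ↦ Real.eulerMascheroniConstant)
    measurable_const (K := |Real.eulerMascheroniConstant|) (r := 0) (by simp) hs_pos
  have isum := integrableOn_mul_cpow (measurable_sum_Icc_floor primeCoeff)
    (fun x hx ↦ abs_sum_primeCoeff_floor_le hx) hs
  have ilog := integrableOn_mul_cpow Real.measurable_log (fun x hx ↦ abs_log_le_rpow_one hx) hs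
  calc ∫ x in Ioi (1 : ℝ), (primeDelta x : ℂ) * (x : ℂ) ^ (-(s + 1))
      = Real.eulerMascheroniConstant / s + LSeries (fun n ↦ (primeCoeff n : ℂ)) s / s
          - 1 / s ^ 2 := by
        rw [← hconst, ← integral_sum_primeCoeff_mul_cpow hs,
          ← integral_log_mul_cpow hs_pos, ← integral_add iconst isum,
          ← integral_sub (Integrable.fun_add iconst isum) ilog]
        refine setIntegral_congr_fun measurableSet_Ioi fun x _ ↦ ?_
        simp only [primeDelta]
        push_cast
        ring
    _ = deltaTransform s / s := by
        rw [(LSeriesHasSum_primeCoeff hs_pos).LSeries_eq, deltaTransform, deltaRegular,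
          logDeriv_riemannZeta_eq (s := s + 1) (by simpa using hs0)
            (riemannZeta₁_ne_zero_of_one_le_re (by simpa using hs_pos.le)), add_sub_cancel_right]
        field_simp
        ring

end PrimeDelta

section OneSidedBound

open Complex MeasureTheory ProbabilityTheory Set

/-- The function `ε Δ(x) + C x ^ (-3/4)`, where `Δ` is `primeDelta`. -/
noncomputable def shiftedDelta (ε C x : ℝ) : ℝ := ε * primeDelta x + C * x ^ (-(3 / 4) : ℝ)

/-- One-sidedness of `primeDelta`: up to a term `C x ^ (-3/4)`, it has the sign `ε = ±1` on
`(1, ∞)`. This is what the finiteness of one of the two sets of indices provides. -/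
structure SignHypothesis (ε C : ℝ) : Prop where
  abs_eq_one : |ε| = 1
  const_nonneg : 0 ≤ C
  nonneg : ∀ x, 1 < x → 0 ≤ shiftedDelta ε C x

lemma measurable_shiftedDelta (ε C : ℝ) : Measurable (shiftedDelta ε C) :=
  (measurable_primeDelta.const_mul _).add ((measurable_id.pow_const _).const_mul _)

lemma add_three_quarters_ne_zero {s : ℂ} (hs : -1 / 2 < s.re) : s + 3 / 4 ≠ 0 := by
  refine ne_zero_of_re_pos ?_
  norm_num [add_re]
  linarith

lemma analyticAt_mul_div_add_three_quarters (C : ℝ) {s : ℂ} (hs : -1 / 2 < s.re) :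
    AnalyticAt ℂ (fun s : ℂ ↦ s * (C / (s + 3 / 4))) s :=
  analyticAt_id.mul (analyticAt_const.div (by fun_prop) (add_three_quarters_ne_zero hs))

/-- The function that continues `ζ₁'/ζ₁ (s + 1)` analytically to `Re s > -1/2` under
`SignHypothesis ε C`. -/
noncomputable def zetaLogDerivContinuation (ε C : ℝ) (s : ℂ) : ℂ :=
  deltaRegular s - ε * (s * mellinMGF (shiftedDelta ε C) s - s * (C / (s + 3 / 4)))

namespace SignHypothesis

variable {ε C : ℝ} (h : SignHypothesis ε C)
include h

lemma mul_self_eq_one : (ε : ℂ) * ε = 1 := by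
  have hε : ε * ε = 1 := by rw [← abs_mul_abs_self, h.abs_eq_one, one_mul]
  exact_mod_cast hε

lemma Ioi_one_subset_mellinSet : Ioi 1 ⊆ mellinSet (shiftedDelta ε C) := by
  refine Ioi_subset_mellinSet (measurable_shiftedDelta ε C) h.nonneg
    (K := |Real.eulerMascheroniConstant| + 2 + C) fun x hx ↦ ?_
  have hpow : x ^ (-(3 / 4) : ℝ) ≤ x ^ (1 : ℝ) :=
    Real.rpow_le_rpow_of_exponent_le hx.le (by norm_num)
  calc ε * primeDelta x + C * x ^ (-(3 / 4) : ℝ)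
      ≤ |ε * primeDelta x| + C * x ^ (1 : ℝ) :=
        add_le_add (le_abs_self _) (mul_le_mul_of_nonneg_left hpow h.const_nonneg)
    _ ≤ (|Real.eulerMascheroniConstant| + 2 + C) * x ^ (1 : ℝ) := by
        rw [abs_mul, h.abs_eq_one, one_mul, add_mul]
        gcongr
        exact abs_primeDelta_le hx

lemma mellinMGF_eq_of_one_lt {s : ℂ} (hs : 1 < s.re) :
    mellinMGF (shiftedDelta ε C) s = ε * (deltaTransform s / s) + C / (s + 3 / 4) := by
  have hpow := integral_rpow_mul_cpow (a := -(3 / 4)) (s := s) (by linarith)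
  have ipow := integrableOn_mul_cpow (f := fun x ↦ x ^ (-(3 / 4) : ℝ)) (measurable_id.pow_const _)
    (K := 1) (r := -(3 / 4)) (s := s) (fun x hx ↦ by
      rw [one_mul, abs_of_nonneg (Real.rpow_nonneg (by linarith) _)]) (by linarith)
  have idelta := integrableOn_mul_cpow measurable_primeDelta (fun x hx ↦ abs_primeDelta_le hx) hs
  rw [show s + 3 / 4 = s - ((-(3 / 4) : ℝ) : ℂ) by push_cast; ring,
    mellinMGF_eq (measurable_shiftedDelta ε C) h.nonneg, div_eq_mul_one_div (C : ℂ), ← hpow,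
    ← integral_primeDelta hs, ← integral_const_mul, ← integral_const_mul,
    ← integral_add (idelta.const_mul _) (ipow.const_mul _)]
  refine setIntegral_congr_fun measurableSet_Ioi fun x _ ↦ ?_
  simp only [shiftedDelta]
  push_cast
  ring

-- Landau's theorem applies because the transform has no singularity on the real axis to the right
-- of `-1/2`: `ζ₁` has no real zeros there, and `deltaTransform` vanishes at `0`.
lemma Ioi_subset_mellinSet : Ioi (-1 / 2) ⊆ mellinSet (shiftedDelta ε C) := by
  set U : Set ℂ := {s | -1 / 2 < s.re ∧ riemannZeta₁ (s + 1) ≠ 0}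
  have hU : IsOpen U := (isOpen_re_gt _).inter
    (isOpen_ne.preimage (differentiable_riemannZeta₁.continuous.comp (continuous_add_const 1)))
  have hmem (t : ℝ) (ht : -1 / 2 < t) : (t : ℂ) ∈ U := by
    have hζ := riemannZeta₁_ofReal_ne_zero (t := t + 1) (by linarith)
    exact ⟨by simpa using ht, by simpa using hζ⟩
  have hd : DifferentiableOn ℂ deltaTransform U := fun s hs ↦
    (analyticAt_deltaTransform hs.1 hs.2).differentiableAt.differentiableWithinAt
  have h0 : U ∈ 𝓝 (0 : ℂ) := hU.mem_nhds (by simpa using hmem 0 (by norm_num))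
  have hslope := (differentiableOn_dslope h0).2 hd
  refine Ioi_subset_integrableExpSet_of_analyticAt (b := 1)
    (f := fun s ↦ ε * dslope deltaTransform 0 s + C / (s + 3 / 4))
    Real.measurable_log.neg.aemeasurable (ae_neg_log_nonpos _) h.Ioi_one_subset_mellinSet
    (fun t ht ↦ ?_) fun t ht ↦ ?_
  · exact (analyticAt_const.mul (hslope.analyticAt (hU.mem_nhds (hmem t ht)))).add
      (analyticAt_const.div (by fun_prop) (add_three_quarters_ne_zero (by simpa using ht)))
  · have ht0 : (t : ℂ) ≠ 0 := ofReal_ne_zero.2 (by linarith)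
    change _ = mellinMGF (shiftedDelta ε C) t
    rw [h.mellinMGF_eq_of_one_lt (by simpa using ht), dslope_of_ne _ ht0, slope_def_field,
      deltaTransform_zero, sub_zero, sub_zero]

lemma analyticOnNhd_mellinMGF :
    AnalyticOnNhd ℂ (mellinMGF (shiftedDelta ε C)) {s | -1 / 2 < s.re} :=
  _root_.analyticOnNhd_mellinMGF h.Ioi_subset_mellinSet

lemma analyticOnNhd_zetaLogDerivContinuation :
    AnalyticOnNhd ℂ (zetaLogDerivContinuation ε C) {s | -1 / 2 < s.re} := fun s hs ↦
  (analyticAt_deltaRegular hs).sub (analyticAt_const.mul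
    ((analyticAt_id.mul (h.analyticOnNhd_mellinMGF s hs)).sub
      (analyticAt_mul_div_add_three_quarters C hs)))

lemma zetaLogDerivContinuation_eq_of_one_lt {s : ℂ} (hs : 1 < s.re) :
    zetaLogDerivContinuation ε C s = logDeriv riemannZeta₁ (s + 1) := by
  have hs0 : s ≠ 0 := ne_zero_of_one_lt_re hs
  have hM : s * mellinMGF (shiftedDelta ε C) s - s * (C / (s + 3 / 4)) = ε * deltaTransform s := by
    rw [h.mellinMGF_eq_of_one_lt hs]
    field_simp
    ring
  rw [zetaLogDerivContinuation, hM, ← mul_assoc, h.mul_self_eq_one, one_mul, deltaTransform,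
    sub_sub_cancel]

lemma deriv_riemannZeta₁_eq_mul {s : ℂ} (hs : -1 / 2 < s.re) :
    deriv riemannZeta₁ (s + 1) = zetaLogDerivContinuation ε C s * riemannZeta₁ (s + 1) := by
  have hlin : AnalyticOnNhd ℂ (fun s : ℂ ↦ s + 1) {s | -1 / 2 < s.re} := fun _ _ ↦ by fun_prop
  have hζ (z : ℂ) : AnalyticAt ℂ riemannZeta₁ z := differentiable_riemannZeta₁.analyticAt z
  refine AnalyticOnNhd.eqOn_of_preconnected_of_eventuallyEq (z₀ := 2)
    (U := {s : ℂ | -1 / 2 < s.re}) (f := fun s ↦ deriv riemannZeta₁ (s + 1))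
    (g := fun s ↦ zetaLogDerivContinuation ε C s * riemannZeta₁ (s + 1))
    (fun s hs ↦ AnalyticAt.fun_comp (f := fun s : ℂ ↦ s + 1) (hζ _).deriv (hlin s hs))
    (h.analyticOnNhd_zetaLogDerivContinuation.mul
      fun s hs ↦ AnalyticAt.fun_comp (f := fun s : ℂ ↦ s + 1) (hζ _) (hlin s hs))
    (convex_halfSpace_re_gt _).isPreconnected (by norm_num) ?_ hs
  filter_upwards [(isOpen_re_gt 1).mem_nhds (by norm_num : (1 : ℝ) < (2 : ℂ).re)]
    with s (hs : 1 < s.re)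
  rw [h.zetaLogDerivContinuation_eq_of_one_lt hs, logDeriv_apply,
    div_mul_cancel₀ _ (riemannZeta₁_ne_zero_of_one_le_re (by simp; linarith))]

theorem riemannZeta₁_ne_zero {w : ℂ} (hw : 1 / 2 < w.re) : riemannZeta₁ w ≠ 0 := by
  have hw1 : -1 / 2 < (w - 1).re := by simp; linarith
  refine ne_zero_of_deriv_eventuallyEq_mul (a := fun z ↦ zetaLogDerivContinuation ε C (z - 1))
    (differentiable_riemannZeta₁.analyticAt w) (analyticOrderAt_riemannZeta₁_ne_top w)
    (AnalyticAt.fun_comp (f := fun z : ℂ ↦ z - 1)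
      (h.analyticOnNhd_zetaLogDerivContinuation _ hw1) (by fun_prop)) ?_
  filter_upwards [(isOpen_re_gt _).mem_nhds hw] with z (hz : 1 / 2 < z.re)
  simpa using h.deriv_riemannZeta₁_eq_mul (s := z - 1) (by simp; linarith)

lemma zetaLogDerivContinuation_eq {s : ℂ} (hs : -1 / 2 < s.re) :
    zetaLogDerivContinuation ε C s = logDeriv riemannZeta₁ (s + 1) := by
  rw [logDeriv_apply, h.deriv_riemannZeta₁_eq_mul hs,
    mul_div_cancel_right₀ _ (h.riemannZeta₁_ne_zero (by simp; linarith))]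

lemma mul_mellinMGF_eq {s : ℂ} (hs : -1 / 2 < s.re) :
    s * mellinMGF (shiftedDelta ε C) s = ε * deltaTransform s + s * (C / (s + 3 / 4)) := by
  rw [deltaTransform, ← h.zetaLogDerivContinuation_eq hs, zetaLogDerivContinuation, sub_sub_cancel,
    ← mul_assoc, h.mul_self_eq_one]
  ring

end SignHypothesis

end OneSidedBound

section BoundaryLimits

open Complex MeasureTheory ProbabilityTheory Set

/-- The multiplicity of `1/2 + iτ` as a zero of the zeta function. -/
noncomputable def zetaMult (τ : ℝ) : ℕ := analyticOrderNatAt riemannZeta₁ (1 / 2 + I * τ)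

lemma tendsto_ofReal_nhdsGT_zero : Tendsto (fun δ : ℝ ↦ (δ : ℂ)) (𝓝[>] 0) (𝓝 0) :=
  (continuous_ofReal.tendsto' 0 0 ofReal_zero).mono_left nhdsWithin_le_nhds

lemma tendsto_add_ofReal_nhdsGT_zero (z : ℂ) :
    Tendsto (fun δ : ℝ ↦ z + δ) (𝓝[>] 0) (𝓝[≠] z) := by
  refine tendsto_nhdsWithin_iff.2 ⟨by simpa using tendsto_ofReal_nhdsGT_zero.const_add z, ?_⟩
  filter_upwards [self_mem_nhdsWithin] with δ hδ
  simpa using (mem_Ioi.1 hδ).ne'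

lemma tendsto_mul_comp_add_ofReal {f : ℂ → ℂ} {z : ℂ} (hf : ContinuousAt f z) :
    Tendsto (fun δ : ℝ ↦ δ * f (z + δ)) (𝓝[>] 0) (𝓝 0) := by
  have hfz := hf.tendsto.comp
    ((tendsto_add_ofReal_nhdsGT_zero z).mono_right nhdsWithin_le_nhds)
  simpa using tendsto_ofReal_nhdsGT_zero.mul hfz

lemma tendsto_mul_logDeriv_riemannZeta₁ (τ : ℝ) :
    Tendsto (fun δ : ℝ ↦ δ * logDeriv riemannZeta₁ (1 / 2 + I * τ + δ)) (𝓝[>] 0)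
      (𝓝 (zetaMult τ)) := by
  refine ((tendsto_sub_mul_logDeriv (differentiable_riemannZeta₁.analyticAt _)
    (analyticOrderAt_riemannZeta₁_ne_top _)).comp
      (tendsto_add_ofReal_nhdsGT_zero (1 / 2 + I * τ))).congr fun δ ↦ ?_
  simp

lemma tendsto_mul_inv_two_mul_sub_one (τ : ℝ) :
    Tendsto (fun δ : ℝ ↦ δ * (1 / (2 * (1 / 2 + I * τ + δ) - 1))) (𝓝[>] 0)
      (𝓝 (if τ = 0 then 1 / 2 else 0)) := by
  split_ifs with hτ
  · refine tendsto_const_nhds.congr' ?_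
    filter_upwards [self_mem_nhdsWithin] with δ hδ
    have hδ0 : (δ : ℂ) ≠ 0 := ofReal_ne_zero.2 (mem_Ioi.1 hδ).ne'
    rw [hτ, ofReal_zero, mul_zero, add_zero, mul_add, add_sub_assoc, mul_one_div_cancel two_ne_zero,
      add_sub_cancel]
    field_simp
  · have hne : 2 * (1 / 2 + I * τ) - 1 ≠ 0 := by
      rw [show 2 * (1 / 2 + I * τ) - 1 = 2 * I * τ by ring]
      simp [hτ]
    exact tendsto_mul_comp_add_ofReal (f := fun w ↦ 1 / (2 * w - 1))
      (continuousAt_const.div (by fun_prop) hne)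

lemma tendsto_mul_logDeriv_riemannZeta_two_mul (τ : ℝ) :
    Tendsto (fun δ : ℝ ↦ δ * logDeriv riemannZeta (2 * (1 / 2 + I * τ + δ))) (𝓝[>] 0)
      (𝓝 (-(if τ = 0 then 1 / 2 else 0))) := by
  have hζ : ContinuousAt (fun w ↦ logDeriv riemannZeta₁ (2 * w)) (1 / 2 + I * τ) := by
    have hne : riemannZeta₁ (2 * (1 / 2 + I * τ)) ≠ 0 :=
      riemannZeta₁_ne_zero_of_one_le_re (by simp)
    exact ContinuousAt.comp (f := fun w : ℂ ↦ 2 * w)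
      (analyticAt_logDeriv (differentiable_riemannZeta₁.analyticAt _) hne).continuousAt
      (by fun_prop)
  have hlim := (tendsto_mul_comp_add_ofReal hζ).sub (tendsto_mul_inv_two_mul_sub_one τ)
  rw [zero_sub] at hlim
  refine hlim.congr' ?_
  filter_upwards [self_mem_nhdsWithin] with δ hδ
  have hre : 1 < (2 * (1 / 2 + I * τ + δ)).re := by simpa [mul_add] using hδ
  rw [logDeriv_riemannZeta_eq (fun h ↦ by rw [h, one_re] at hre; exact hre.false)
    (riemannZeta₁_ne_zero_of_one_le_re hre.le), mul_sub]

lemma tendsto_mul_deltaTransform (τ : ℝ) :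
    Tendsto (fun δ : ℝ ↦ δ * deltaTransform (-1 / 2 + I * τ + δ)) (𝓝[>] 0)
      (𝓝 (-(zetaMult τ + if τ = 0 then 1 / 2 else 0))) := by
  have hR : ContinuousAt (fun w ↦ (Real.eulerMascheroniConstant : ℂ) + primeRemainder w)
      (1 / 2 + I * τ) :=
    continuousAt_const.add (analyticAt_primeRemainder (by norm_num)).continuousAt
  have hlim := ((tendsto_mul_comp_add_ofReal hR).add
    (tendsto_mul_logDeriv_riemannZeta_two_mul τ)).sub (tendsto_mul_logDeriv_riemannZeta₁ τ)
  rw [zero_add, ← neg_add', add_comm (ite _ _ _)] at hlim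
  refine hlim.congr fun δ ↦ ?_
  rw [deltaTransform, deltaRegular,
    show -1 / 2 + I * τ + δ + 1 = 1 / 2 + I * τ + (δ : ℂ) by ring]
  ring

theorem SignHypothesis.tendsto_mul_mellinMGF {ε C : ℝ} (h : SignHypothesis ε C) (τ : ℝ) :
    Tendsto (fun δ : ℝ ↦ (δ : ℂ) * mellinMGF (shiftedDelta ε C) (-1 / 2 + I * τ + δ))
      (𝓝[>] 0) (𝓝 (ε * (zetaMult τ + if τ = 0 then 1 / 2 else 0) / (1 / 2 - I * τ))) := by
  set z : ℂ := -1 / 2 + I * τ with hz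
  have hz_re : z.re = -1 / 2 := by simp [hz]
  have hz0 : z ≠ 0 := fun h0 ↦ by norm_num [h0] at hz_re
  have hC : ContinuousAt (fun s : ℂ ↦ (C : ℂ) / (s + 3 / 4)) z :=
    continuousAt_const.div (by fun_prop) (ne_zero_of_re_pos (by norm_num [hz_re, add_re]))
  have hzδ := (tendsto_add_ofReal_nhdsGT_zero z).mono_right nhdsWithin_le_nhds
  have hlim := (((tendsto_mul_deltaTransform τ).const_mul (ε : ℂ)).div hzδ hz0).add
    (tendsto_mul_comp_add_ofReal hC)
  have hval : ε * -(zetaMult τ + if τ = 0 then 1 / 2 else 0) / z + 0 =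
      ε * (zetaMult τ + if τ = 0 then 1 / 2 else 0) / (1 / 2 - I * τ) := by
    rw [add_zero, mul_neg, show 1 / 2 - I * τ = -z by rw [hz]; ring, div_neg, neg_div]
  rw [hval] at hlim
  refine hlim.congr' ?_
  filter_upwards [self_mem_nhdsWithin, nhdsWithin_le_nhds (Iio_mem_nhds one_half_pos)]
    with δ hδ0 hδ1
  have hre : (z + δ).re = -1 / 2 + δ := by rw [add_re, hz_re, ofReal_re]
  have hzδ0 : z + δ ≠ 0 := fun h0 ↦ by
    rw [h0, zero_re] at hre
    linarith [mem_Iio.1 hδ1]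
  have hM := h.mul_mellinMGF_eq (s := z + δ) (by rw [hre]; linarith [mem_Ioi.1 hδ0])
  rw [← mul_div_cancel_left₀ (mellinMGF (shiftedDelta ε C) (z + δ)) hzδ0, hM, add_div,
    mul_div_cancel_left₀ _ hzδ0]
  simp only [Pi.div_apply]
  ring

end BoundaryLimits

section LogDerivBound

open Complex MeasureTheory ProbabilityTheory Set

lemma exists_le_mul_one_add_inv {F : ℝ → ℝ} {a l : ℝ} (hF : AntitoneOn F (Ioi a))
    (hl : Tendsto (fun δ ↦ δ * F (a + δ)) (𝓝[>] 0) (𝓝 l)) :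
    ∃ K, 0 ≤ K ∧ ∀ x, a < x → F x ≤ K * (1 + 1 / (x - a)) := by
  obtain ⟨d, hd, hsub⟩ :=
    mem_nhdsGT_iff_exists_Ioo_subset.1 (hl.eventually (Iio_mem_nhds (lt_add_one l)))
  have hd0 : 0 < d := hd
  set K := max (|l| + 1) |F (a + d / 2)|
  have hK0 : 0 ≤ K := by positivity
  refine ⟨K, hK0, fun x hx ↦ ?_⟩
  have hx' : 0 < x - a := sub_pos.2 hx
  rw [mul_add, mul_one_div, mul_one]
  rcases lt_or_ge (x - a) d with hnear | hfar
  · have hFx : (x - a) * F (a + (x - a)) < l + 1 := hsub ⟨hx', hnear⟩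
    rw [add_sub_cancel, mul_comm] at hFx
    have hlK : l + 1 ≤ K := (add_le_add_left (le_abs_self l) 1).trans (le_max_left _ _)
    have hFK : F x ≤ K / (x - a) := by
      rw [le_div_iff₀ hx']
      exact hFx.le.trans hlK
    linarith
  · have hFx : F x ≤ F (a + d / 2) := hF (by simp [hd0]) hx (by linarith)
    have hFK : F (a + d / 2) ≤ K := (le_abs_self _).trans (le_max_right _ _)
    have hK' : 0 ≤ K / (x - a) := by positivity
    linarith

lemma hasSum_neg_re_logDeriv_riemannZeta {σ : ℝ} (hσ : 1 < σ) :
    HasSum (fun p : Nat.Primes ↦ Real.log p / (((p : ℕ) : ℝ) ^ σ - 1))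
      (-logDeriv riemannZeta σ).re := by
  refine (hasSum_re (hasSum_neg_logDeriv_riemannZeta (w := σ) (by simpa using hσ))).congr_fun
    fun p ↦ ?_
  rw [← ofReal_natCast, ← ofReal_cpow (by positivity), ← ofReal_one, ← ofReal_sub, ← ofReal_div,
    ofReal_re]

lemma norm_logDeriv_riemannZeta_le {w : ℂ} (hw : 1 < w.re) :
    ‖logDeriv riemannZeta w‖ ≤ (-logDeriv riemannZeta w.re).re := by
  rw [← norm_neg, ← (hasSum_neg_logDeriv_riemannZeta hw).tsum_eq]
  refine tsum_of_norm_bounded (hasSum_neg_re_logDeriv_riemannZeta hw) fun p ↦ ?_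
  have hp : (1 : ℝ) < (p : ℕ) := by exact_mod_cast p.2.one_lt
  have hpw : 1 < ((p : ℕ) : ℝ) ^ w.re := Real.one_lt_rpow hp (by linarith)
  have hlog := Real.log_nonneg hp.le
  have hden : ((p : ℕ) : ℝ) ^ w.re - 1 ≤ ‖((p : ℕ) : ℂ) ^ w - 1‖ := by
    simpa only [norm_one, norm_natCast_cpow_of_pos p.2.pos] using
      norm_sub_norm_le (((p : ℕ) : ℂ) ^ w) 1
  rw [norm_div, norm_real, Real.norm_of_nonneg hlog]
  gcongr

lemma antitoneOn_neg_re_logDeriv_riemannZeta :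
    AntitoneOn (fun σ : ℝ ↦ (-logDeriv riemannZeta σ).re) (Ioi 1) := by
  intro s (hs : 1 < s) t (ht : 1 < t) hst
  refine hasSum_le (fun p ↦ ?_) (hasSum_neg_re_logDeriv_riemannZeta ht)
    (hasSum_neg_re_logDeriv_riemannZeta hs)
  have hp : (1 : ℝ) < (p : ℕ) := by exact_mod_cast p.2.one_lt
  have hps : 1 < ((p : ℕ) : ℝ) ^ s := Real.one_lt_rpow hp (by linarith)
  have : 0 ≤ Real.log (p : ℕ) := Real.log_nonneg hp.le
  gcongr
  exact hp.le

lemma tendsto_mul_neg_re_logDeriv_riemannZeta :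
    Tendsto (fun δ : ℝ ↦ δ * (-logDeriv riemannZeta (1 + δ : ℝ)).re) (𝓝[>] 0) (𝓝 1) := by
  have hζ : ContinuousAt (logDeriv riemannZeta₁) 1 :=
    (analyticAt_logDeriv (differentiable_riemannZeta₁.analyticAt 1) (by simp)).continuousAt
  have hlim := (continuous_re.tendsto _).comp ((tendsto_mul_comp_add_ofReal hζ).const_sub 1)
  rw [sub_zero, one_re] at hlim
  refine hlim.congr' ?_
  filter_upwards [self_mem_nhdsWithin] with δ (hδ : 0 < δ)
  have hδ0 : (δ : ℂ) ≠ 0 := ofReal_ne_zero.2 hδ.ne'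
  rw [Function.comp_apply, ← re_ofReal_mul, ofReal_add, ofReal_one,
    logDeriv_riemannZeta_eq (by simpa using hδ.ne')
      (riemannZeta₁_ne_zero_of_one_le_re (by simp [hδ.le])), add_sub_cancel_left]
  congr 1
  field_simp
  ring

lemma exists_norm_logDeriv_riemannZeta_le :
    ∃ K, 0 ≤ K ∧ ∀ w : ℂ, 1 < w.re → ‖logDeriv riemannZeta w‖ ≤ K * (1 + 1 / (w.re - 1)) := by
  obtain ⟨K, hK0, hK⟩ := exists_le_mul_one_add_inv antitoneOn_neg_re_logDeriv_riemannZeta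
    tendsto_mul_neg_re_logDeriv_riemannZeta
  exact ⟨K, hK0, fun w hw ↦ (norm_logDeriv_riemannZeta_le hw).trans (hK _ hw)⟩

lemma exists_norm_deltaRegular_le : ∃ K, 0 ≤ K ∧ ∀ s : ℂ, -1 / 2 < s.re →
    ‖deltaRegular s‖ ≤ K * (1 + 1 / (s.re + 1 / 2)) := by
  obtain ⟨K₁, hK₁, hζ⟩ := exists_norm_logDeriv_riemannZeta_le
  obtain ⟨K₂, hR⟩ := exists_norm_primeRemainder_le
  have hK₂ : 0 ≤ K₂ := (norm_nonneg _).trans (hR 1 (by norm_num))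
  set c := |Real.eulerMascheroniConstant| + K₂
  have : 0 ≤ c := by positivity
  refine ⟨c + K₁, by positivity, fun s hs ↦ ?_⟩
  have hd : 0 < s.re + 1 / 2 := by linarith
  have hζs : ‖logDeriv riemannZeta (2 * (s + 1))‖ ≤ K₁ * (1 + 1 / (s.re + 1 / 2)) := by
    have hre : (2 * (s + 1)).re - 1 = 2 * (s.re + 1 / 2) := by simp; ring
    refine (hζ (2 * (s + 1)) (by linarith)).trans ?_
    rw [hre]
    gcongr
    linarith
  have hRs : ‖primeRemainder (s + 1)‖ ≤ K₂ := hR _ (by simp; linarith)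
  calc ‖deltaRegular s‖
      ≤ |Real.eulerMascheroniConstant| + K₁ * (1 + 1 / (s.re + 1 / 2)) + K₂ := by
        refine norm_add₃_le.trans (add_le_add (add_le_add ?_ hζs) hRs)
        rw [norm_real, Real.norm_eq_abs]
    _ = c * 1 + K₁ * (1 + 1 / (s.re + 1 / 2)) := by ring
    _ ≤ c * (1 + 1 / (s.re + 1 / 2)) + K₁ * (1 + 1 / (s.re + 1 / 2)) := by
        gcongr
        exact le_add_of_nonneg_right (by positivity)
    _ = (c + K₁) * (1 + 1 / (s.re + 1 / 2)) := by ring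

lemma norm_mul_div_add_three_quarters_le {C : ℝ} (hC : 0 ≤ C) {s : ℂ} (hs : -1 / 2 < s.re) :
    ‖s * (C / (s + 3 / 4))‖ ≤ 4 * C := by
  have hne := add_three_quarters_ne_zero hs
  have hden : 1 / 4 ≤ ‖s + 3 / 4‖ := by
    refine le_trans ?_ (re_le_norm _)
    norm_num [add_re]
    linarith
  have hratio : ‖s / (s + 3 / 4)‖ ≤ 4 := by
    have hs : s / (s + 3 / 4) = 1 - 3 / 4 / (s + 3 / 4) := by
      rw [eq_sub_iff_add_eq, ← add_div, div_self hne]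
    calc ‖s / (s + 3 / 4)‖ ≤ ‖(1 : ℂ)‖ + ‖(3 / 4 : ℂ) / (s + 3 / 4)‖ := hs ▸ norm_sub_le _ _
      _ = 1 + 3 / 4 / ‖s + 3 / 4‖ := by rw [norm_div, norm_one]; norm_num
      _ ≤ 1 + 3 / 4 / (1 / 4) := by gcongr
      _ = 4 := by norm_num
  calc ‖s * (C / (s + 3 / 4))‖ = ‖s / (s + 3 / 4)‖ * C := by
        rw [mul_div_assoc', ← div_mul_eq_mul_div, norm_mul, norm_real, Real.norm_of_nonneg hC]
    _ ≤ 4 * C := by gcongr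

namespace SignHypothesis

variable {ε C : ℝ} (h : SignHypothesis ε C)
include h

lemma tendsto_mul_mgf :
    Tendsto (fun δ ↦ δ * mgf (fun x ↦ -Real.log x) (mellinMeasure (shiftedDelta ε C)) (-1 / 2 + δ))
      (𝓝[>] 0) (𝓝 (ε * (2 * zetaMult 0 + 1))) := by
  have hlim := (continuous_re.tendsto _).comp (h.tendsto_mul_mellinMGF 0)
  have hval : ε * (zetaMult 0 + if (0 : ℝ) = 0 then 1 / 2 else 0) / (1 / 2 - I * (0 : ℝ)) =
      ((ε * (2 * zetaMult 0 + 1) : ℝ) : ℂ) := by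
    push_cast
    rw [if_pos rfl, mul_zero, sub_zero]
    ring
  rw [hval, ofReal_re] at hlim
  refine hlim.congr fun δ ↦ ?_
  rw [Function.comp_apply, re_ofReal_mul, ofReal_zero, mul_zero, add_zero,
    show -1 / 2 + (δ : ℂ) = ((-1 / 2 + δ : ℝ) : ℂ) by push_cast; ring, mellinMGF,
    complexMGF_ofReal, ofReal_re]

-- The pole of `ζ (2 (s + 1))` at `s = -1/2` decides the sign.
lemma eq_one : ε = 1 := by
  refine (eq_or_eq_neg_of_abs_eq h.abs_eq_one).resolve_right fun hε ↦ ?_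
  have hlim_nonneg : 0 ≤ ε * (2 * zetaMult 0 + 1) := by
    refine ge_of_tendsto h.tendsto_mul_mgf ?_
    filter_upwards [self_mem_nhdsWithin] with δ hδ using mul_nonneg (le_of_lt hδ) mgf_nonneg
  have hmult : (0 : ℝ) ≤ zetaMult 0 := Nat.cast_nonneg _
  rw [hε] at hlim_nonneg
  linarith

lemma exists_norm_mellinMGF_le : ∃ K, 0 ≤ K ∧ ∀ s : ℂ, -1 / 2 < s.re →
    ‖mellinMGF (shiftedDelta ε C) s‖ ≤ K * (1 + 1 / (s.re + 1 / 2)) := by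
  have hanti : AntitoneOn (mgf (fun x ↦ -Real.log x) (mellinMeasure (shiftedDelta ε C)))
      (Ioi (-1 / 2)) := by
    intro s hs t ht hst
    refine integral_mono_ae (h.Ioi_subset_mellinSet ht) (h.Ioi_subset_mellinSet hs) ?_
    filter_upwards [ae_neg_log_nonpos (shiftedDelta ε C)] with x hx
    exact Real.exp_le_exp.2 (mul_le_mul_of_nonpos_right hst hx)
  obtain ⟨K, hK0, hK⟩ := exists_le_mul_one_add_inv hanti h.tendsto_mul_mgf
  refine ⟨K, hK0, fun s hs ↦ norm_complexMGF_le_mgf.trans ?_⟩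
  rw [show s.re + 1 / 2 = s.re - -1 / 2 by ring]
  exact hK _ hs

lemma exists_norm_logDeriv_riemannZeta₁_le : ∃ K, 0 ≤ K ∧ ∀ w : ℂ, 1 / 2 < w.re →
    ‖logDeriv riemannZeta₁ w‖ ≤ K * (1 + ‖w‖) * (1 + 1 / (w.re - 1 / 2)) := by
  obtain ⟨K₁, hK₁, hM⟩ := h.exists_norm_mellinMGF_le
  obtain ⟨K₂, hK₂, hD⟩ := exists_norm_deltaRegular_le
  have hC := h.const_nonneg
  refine ⟨K₂ + K₁ + 4 * C, by positivity, fun w hw ↦ ?_⟩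
  have hs : -1 / 2 < (w - 1).re := by simp; linarith
  have hre : (w - 1).re + 1 / 2 = w.re - 1 / 2 := by rw [sub_re, one_re]; ring
  have hMs := hM (w - 1) hs
  have hDs := hD (w - 1) hs
  rw [hre] at hMs hDs
  have hws : ‖w - 1‖ ≤ 1 + ‖w‖ := by simpa [add_comm] using norm_sub_le w 1
  have hu : 1 ≤ 1 + ‖w‖ := le_add_of_nonneg_right (norm_nonneg w)
  have hv : 1 ≤ 1 + 1 / (w.re - 1 / 2) :=
    le_add_of_nonneg_right (one_div_nonneg.2 (by linarith))
  rw [← sub_add_cancel w 1, ← h.zetaLogDerivContinuation_eq hs, sub_add_cancel]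
  set u := 1 + ‖w‖
  set v := 1 + 1 / (w.re - 1 / 2)
  have : 0 ≤ v := zero_le_one.trans hv
  calc ‖zetaLogDerivContinuation ε C (w - 1)‖
      ≤ ‖deltaRegular (w - 1)‖ + |ε| * (‖w - 1‖ * ‖mellinMGF (shiftedDelta ε C) (w - 1)‖ +
          ‖(w - 1) * (C / (w - 1 + 3 / 4))‖) := by
        rw [← norm_mul, ← Real.norm_eq_abs, ← norm_real]
        refine (norm_sub_le _ _).trans ?_
        rw [norm_mul]
        gcongr
        exact norm_sub_le _ _
    _ ≤ K₂ * v + (u * (K₁ * v) + 4 * C) := by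
        rw [h.abs_eq_one, one_mul]
        gcongr
        exact norm_mul_div_add_three_quarters_le hC hs
    _ ≤ u * (K₂ * v) + (u * (K₁ * v) + u * v * (4 * C)) := by
        refine add_le_add (le_mul_of_one_le_left (by positivity) hu) (add_le_add_right ?_ _)
        exact le_mul_of_one_le_left (by positivity) (one_le_mul_of_one_le_of_one_le hu hv)
    _ = (K₂ + K₁ + 4 * C) * u * v := by ring

end SignHypothesis

end LogDerivBound

section Digamma

open Complex Set

lemma ne_neg_natCast_of_re_pos {z : ℂ} (hz : 0 < z.re) (m : ℕ) : z ≠ -m := by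
  rintro rfl
  simp only [neg_re, natCast_re, Left.neg_pos_iff] at hz
  exact hz.not_ge m.cast_nonneg

lemma natCast_add_ne_zero_of_re_pos {z : ℂ} (hz : 0 < z.re) (n : ℕ) : (n : ℂ) + z ≠ 0 := by
  rw [add_comm, ← sub_neg_eq_add, sub_ne_zero]
  exact_mod_cast ne_neg_natCast_of_re_pos hz n

lemma differentiableAt_digamma {z : ℂ} (hz : 0 < z.re) : DifferentiableAt ℂ digamma z := by
  have hd : DifferentiableOn ℂ Gamma {z | 0 < z.re} := fun w hw ↦
    (differentiableAt_Gamma w (ne_neg_natCast_of_re_pos hw)).differentiableWithinAt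
  have ha := hd.analyticAt ((isOpen_re_gt 0).mem_nhds hz)
  exact (analyticAt_logDeriv ha (Gamma_ne_zero_of_re_pos hz)).differentiableAt

lemma differentiableAt_log_Gamma {x : ℝ} (hx : 0 < x) :
    DifferentiableAt ℝ (Real.log ∘ Real.Gamma) x := by
  have hne : ∀ m : ℕ, x ≠ -m := fun m ↦ mod_cast ne_neg_natCast_of_re_pos (z := x) hx m
  exact (Real.differentiableAt_Gamma hne).log (Real.Gamma_ne_zero hne)

lemma digamma_ofReal {x : ℝ} (hx : 0 < x) :
    digamma x = (deriv (Real.log ∘ Real.Gamma) x : ℝ) := by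
  have hne : ∀ m : ℕ, x ≠ -m := fun m ↦ mod_cast ne_neg_natCast_of_re_pos (z := x) hx m
  have hΓ : DifferentiableAt ℂ Gamma x :=
    differentiableAt_Gamma _ (ne_neg_natCast_of_re_pos hx)
  have hderiv : deriv Gamma x = (deriv Real.Gamma x : ℝ) := by
    rw [← (funext Gamma_ofReal ▸ hΓ.hasDerivAt.comp_ofReal.deriv :)]
    exact (Real.differentiableAt_Gamma hne).hasDerivAt.ofReal_comp.deriv
  rw [digamma_def, logDeriv_apply, hderiv, Gamma_ofReal, Real.deriv_log_comp_eq_logDeriv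
    (Real.differentiableAt_Gamma hne) (Real.Gamma_ne_zero hne), logDeriv_apply, ofReal_div]

lemma slope_log_Gamma_add_one {x : ℝ} (hx : 0 < x) :
    slope (Real.log ∘ Real.Gamma) x (x + 1) = Real.log x := by
  rw [slope_def_field, Function.comp_apply, Function.comp_apply, Real.Gamma_add_one hx.ne',
    Real.log_mul hx.ne' (Real.Gamma_pos_of_pos hx).ne']
  ring

lemma digamma_ofReal_re_le_log {x : ℝ} (hx : 0 < x) : (digamma x).re ≤ Real.log x := by
  rw [digamma_ofReal hx, ofReal_re, ← slope_log_Gamma_add_one hx]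
  exact Real.convexOn_log_Gamma.deriv_le_slope hx (mem_Ioi.2 (by positivity)) (lt_add_one x)
    (differentiableAt_log_Gamma hx)

lemma log_le_digamma_ofReal_add_one_re {x : ℝ} (hx : 0 < x) :
    Real.log x ≤ (digamma (x + 1 : ℝ)).re := by
  rw [digamma_ofReal (by positivity), ofReal_re, ← slope_log_Gamma_add_one hx]
  exact Real.convexOn_log_Gamma.slope_le_deriv hx (mem_Ioi.2 (by positivity)) (lt_add_one x)
    (differentiableAt_log_Gamma (by positivity))

lemma digamma_add_natCast {z : ℂ} (hz : 0 < z.re) (N : ℕ) :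
    digamma (z + N) = digamma z + ∑ n ∈ Finset.range N, 1 / (n + z) := by
  induction N with
  | zero => simp
  | succ N ih =>
    have hre : 0 < (z + N).re := by
      rw [add_re, natCast_re]
      positivity
    rw [Nat.cast_add_one, ← add_assoc, digamma_apply_add_one _ (ne_neg_natCast_of_re_pos hre), ih,
      Finset.sum_range_succ, add_assoc, add_comm z, one_div]

lemma tendsto_digamma_add_natCast_sub_log {x : ℝ} (hx : 0 < x) :
    Tendsto (fun N : ℕ ↦ digamma (x + N) - Real.log N) atTop (𝓝 0) := by
  have hlog (y : ℝ) : Tendsto (fun N : ℕ ↦ Real.log (N + y) - Real.log N) atTop (𝓝 0) :=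
    (Real.tendsto_log_comp_add_sub_log y).comp tendsto_natCast_atTop_atTop
  have hre : Tendsto (fun N : ℕ ↦ (digamma (x + N : ℝ)).re - Real.log N) atTop (𝓝 0) := by
    refine tendsto_of_tendsto_of_tendsto_of_le_of_le' (hlog (x - 1)) (hlog x) ?_ ?_
    · filter_upwards [eventually_ge_atTop 1] with N hN
      have hN : (1 : ℝ) ≤ N := mod_cast hN
      have := log_le_digamma_ofReal_add_one_re (x := N + (x - 1)) (by linarith)
      rw [show N + (x - 1) + 1 = x + N by ring] at this
      gcongr
    · filter_upwards with N
      rw [add_comm (N : ℝ)]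
      gcongr
      exact digamma_ofReal_re_le_log (by positivity)
  refine ((continuous_ofReal.tendsto _).comp hre).congr fun N ↦ ?_
  have hxN : 0 < x + N := by positivity
  rw [Function.comp_apply, ofReal_sub, ← ofReal_natCast N, ← ofReal_add, digamma_ofReal hxN,
    ofReal_re]

/-- The `n`-th term `1 / (n + 1) - 1 / (n + z)` of the Weierstrass series of `γ + digamma z`. -/
noncomputable def digammaTerm (n : ℕ) (z : ℂ) : ℂ := 1 / (n + 1) - 1 / (n + z)

lemma sqrt_mul_sqrt_norm_le_norm_natCast_add (n : ℕ) {z : ℂ} (hz : 1 / 4 < z.re) :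
    √(n + 1) * √‖z‖ / 2 ≤ ‖n + z‖ := by
  have hnorm : 1 / 4 < ‖z‖ := hz.trans_le (re_le_norm z)
  have hsq : (n : ℝ) ^ 2 + ‖z‖ ^ 2 ≤ ‖n + z‖ ^ 2 := by
    rw [← normSq_eq_norm_sq, ← normSq_eq_norm_sq, normSq_apply, normSq_apply, add_re, add_im,
      natCast_re, natCast_im]
    nlinarith [(Nat.cast_nonneg n : (0 : ℝ) ≤ n)]
  refine (sq_le_sq₀ (by positivity) (norm_nonneg _)).1 ?_
  rw [div_pow, mul_pow, Real.sq_sqrt (by positivity), Real.sq_sqrt (by positivity)]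
  refine le_trans ?_ hsq
  rcases n.eq_zero_or_pos with rfl | hn
  · norm_num
    nlinarith
  · have hn : (1 : ℝ) ≤ n := mod_cast hn
    nlinarith [sq_nonneg ((n : ℝ) - ‖z‖)]

lemma norm_digammaTerm_le (n : ℕ) {z : ℂ} (hz : 1 / 4 < z.re) :
    ‖digammaTerm n z‖ ≤ 10 * √‖z‖ * (1 / ((n : ℝ) + 1) ^ (3 / 2 : ℝ)) := by
  have hnorm : 1 / 4 < ‖z‖ := hz.trans_le (re_le_norm z)
  have hn1 : (n : ℂ) + 1 ≠ 0 := n.cast_add_one_ne_zero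
  have hnz := natCast_add_ne_zero_of_re_pos (z := z) (by linarith) n
  have hterm : digammaTerm n z = (z - 1) / ((n + 1) * (n + z)) := by
    rw [digammaTerm]
    field_simp
    ring
  have hnum : ‖z - 1‖ ≤ 5 * (√‖z‖ * √‖z‖) := by
    rw [Real.mul_self_sqrt (norm_nonneg _)]
    linarith [norm_sub_le z 1, norm_one (α := ℂ)]
  have hpow : ((n : ℝ) + 1) ^ (3 / 2 : ℝ) = (n + 1) * √(n + 1) := by
    rw [Real.sqrt_eq_rpow, ← Real.rpow_one_add' (by positivity) (by norm_num)]
    norm_num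
  have : 0 < √‖z‖ := Real.sqrt_pos.2 (by linarith)
  calc ‖digammaTerm n z‖ = ‖z - 1‖ / ((n + 1) * ‖n + z‖) := by
        rw [hterm, norm_div, norm_mul, ← Nat.cast_add_one, norm_natCast, Nat.cast_add_one]
    _ ≤ 5 * (√‖z‖ * √‖z‖) / ((n + 1) * (√(n + 1) * √‖z‖ / 2)) := by
        gcongr
        exact sqrt_mul_sqrt_norm_le_norm_natCast_add n hz
    _ = 10 * √‖z‖ * (1 / ((n : ℝ) + 1) ^ (3 / 2 : ℝ)) := by
        rw [hpow]
        field_simp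
        norm_num

lemma summable_one_div_add_one_rpow :
    Summable fun n : ℕ ↦ 1 / ((n : ℝ) + 1) ^ (3 / 2 : ℝ) := by
  simpa using (summable_nat_add_iff 1).2
    (Real.summable_one_div_nat_rpow (p := 3 / 2).2 (by norm_num))

lemma summable_digammaTerm {z : ℂ} (hz : 1 / 4 < z.re) : Summable fun n ↦ digammaTerm n z :=
  (summable_one_div_add_one_rpow.mul_left _).of_norm_bounded fun n ↦ norm_digammaTerm_le n hz

lemma differentiableOn_tsum_digammaTerm :
    DifferentiableOn ℂ (fun z ↦ ∑' n, digammaTerm n z) {z | 1 / 4 < z.re} := by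
  intro z hz
  have hU : IsOpen ({z : ℂ | 1 / 4 < z.re} ∩ Metric.ball 0 (‖z‖ + 1)) :=
    (isOpen_re_gt _).inter Metric.isOpen_ball
  refine (DifferentiableOn.differentiableAt (s := {z : ℂ | 1 / 4 < z.re} ∩ Metric.ball 0 (‖z‖ + 1))
    ?_ (hU.mem_nhds ⟨hz, by simp⟩)).differentiableWithinAt
  refine differentiableOn_tsum_of_summable_norm
    (summable_one_div_add_one_rpow.mul_left (10 * √(‖z‖ + 1))) (fun n w hw ↦ ?_) hU
    fun n w hw ↦ (norm_digammaTerm_le n hw.1).trans ?_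
  · have hw0 : 0 < w.re := lt_trans (by norm_num) hw.1
    exact ((differentiableAt_const _).sub ((differentiableAt_const _).div
      ((differentiableAt_const _).add differentiableAt_id)
      (natCast_add_ne_zero_of_re_pos hw0 n))).differentiableWithinAt
  · have := mem_ball_zero_iff.1 hw.2
    gcongr

lemma tsum_digammaTerm_ofReal {x : ℝ} (hx : 1 / 4 < x) :
    ∑' n, digammaTerm n x = Real.eulerMascheroniConstant + digamma x := by
  have hx0 : 0 < x := by linarith
  have hsum := (summable_digammaTerm (z := x) hx).hasSum.tendsto_sum_nat
  have hharm := (continuous_ofReal.tendsto _).comp Real.tendsto_harmonic_sub_log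
  refine tendsto_nhds_unique hsum ?_
  rw [← sub_zero (Real.eulerMascheroniConstant : ℂ)]
  refine ((hharm.sub (tendsto_digamma_add_natCast_sub_log hx0)).add_const _).congr fun N ↦ ?_
  simp only [Function.comp_apply, digammaTerm]
  rw [digamma_add_natCast (z := x) hx0, Finset.sum_sub_distrib, harmonic]
  push_cast
  simp only [one_div]
  ring

lemma tsum_digammaTerm {z : ℂ} (hz : 1 / 4 < z.re) :
    ∑' n, digammaTerm n z = Real.eulerMascheroniConstant + digamma z := by
  have hU : IsOpen {z : ℂ | 1 / 4 < z.re} := isOpen_re_gt _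
  refine AnalyticOnNhd.eqOn_of_preconnected_of_frequently_eq (z₀ := ((1 : ℝ) : ℂ))
    (U := {z | 1 / 4 < z.re}) (f := fun z ↦ ∑' n, digammaTerm n z)
    (g := fun z ↦ Real.eulerMascheroniConstant + digamma z)
    (differentiableOn_tsum_digammaTerm.analyticOnNhd hU)
    (DifferentiableOn.analyticOnNhd (fun w hw ↦ ?_) hU)
    (convex_halfSpace_re_gt _).isPreconnected (by norm_num) ?_ hz
  · have hw0 : 0 < w.re := lt_trans (by norm_num) hw
    exact ((differentiableAt_digamma hw0).const_add _).differentiableWithinAt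
  · refine frequently_ofReal_nhdsNE ?_
    filter_upwards [lt_mem_nhds (show (1 / 4 : ℝ) < 1 by norm_num)] with t ht
    exact tsum_digammaTerm_ofReal ht

lemma exists_norm_digamma_le :
    ∃ K, 0 ≤ K ∧ ∀ z : ℂ, 1 / 4 < z.re → ‖digamma z‖ ≤ K * (1 + √‖z‖) := by
  set S := ∑' n : ℕ, 1 / ((n : ℝ) + 1) ^ (3 / 2 : ℝ)
  have : 0 ≤ S := tsum_nonneg fun n ↦ by positivity
  set c := |Real.eulerMascheroniConstant|
  refine ⟨c + 10 * S, by positivity, fun z hz ↦ ?_⟩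
  have hsum : ‖∑' n, digammaTerm n z‖ ≤ 10 * √‖z‖ * S :=
    tsum_of_norm_bounded (summable_one_div_add_one_rpow.hasSum.mul_left _)
      fun n ↦ norm_digammaTerm_le n hz
  calc ‖digamma z‖ = ‖∑' n, digammaTerm n z - Real.eulerMascheroniConstant‖ := by
        rw [tsum_digammaTerm hz, add_sub_cancel_left]
    _ ≤ 10 * √‖z‖ * S + c := (norm_sub_le _ _).trans (add_le_add hsum (norm_real _).le)
    _ ≤ 10 * √‖z‖ * S + c + (c * √‖z‖ + 10 * S) := le_add_of_nonneg_right (by positivity)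
    _ = (c + 10 * S) * (1 + √‖z‖) := by ring

end Digamma

section Contour

open Complex Metric Set

lemma exists_eq_sub_pow_mul {f : ℂ → ℂ} (hf : Differentiable ℂ f) {ρ : ℂ}
    (hρ : analyticOrderAt f ρ ≠ ⊤) :
    ∃ g : ℂ → ℂ, Differentiable ℂ g ∧ (∀ w, f w = (w - ρ) ^ analyticOrderNatAt f ρ * g w) ∧
      g ρ ≠ 0 := by
  obtain ⟨g, hg, hg0, hfg⟩ := (hf.analyticAt ρ).analyticOrderAt_ne_top.1 hρ
  set n := analyticOrderNatAt f ρ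
  set q := Function.update (fun w ↦ f w / (w - ρ) ^ n) ρ (g ρ) with hq
  have hqρ : q ρ = g ρ := Function.update_self ..
  have hq_ne {w : ℂ} (hw : w ≠ ρ) : q w = f w / (w - ρ) ^ n := Function.update_of_ne hw ..
  have hpow {w : ℂ} (hw : w ≠ ρ) : (w - ρ) ^ n ≠ 0 := pow_ne_zero n (sub_ne_zero.2 hw)
  refine ⟨q, fun w ↦ ?_, fun w ↦ ?_, hqρ ▸ hg0⟩ <;> rcases eq_or_ne w ρ with rfl | hw
  · refine hg.differentiableAt.congr_of_eventuallyEq ?_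
    filter_upwards [hfg] with z hz
    rcases eq_or_ne z w with rfl | hzw
    · exact hqρ
    · rw [hq_ne hzw, hz, smul_eq_mul, mul_div_cancel_left₀ _ (hpow hzw)]
  · have hdiv : DifferentiableAt ℂ (fun w ↦ f w / (w - ρ) ^ n) w :=
      (hf w).div (by fun_prop) (hpow hw)
    refine hdiv.congr_of_eventuallyEq ?_
    filter_upwards [isOpen_ne.mem_nhds hw] with z hz using hq_ne hz
  · rw [hqρ]
    exact hfg.self_of_nhds
  · rw [hq_ne hw, mul_div_cancel₀ _ (hpow hw)]

lemma exists_eq_prod_mul {f : ℂ → ℂ} (hf : Differentiable ℂ f)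
    (hne : ∀ z, analyticOrderAt f z ≠ ⊤) (S : Finset ℂ) :
    ∃ g : ℂ → ℂ, Differentiable ℂ g ∧
      (∀ w, f w = (∏ ρ ∈ S, (w - ρ) ^ analyticOrderNatAt f ρ) * g w) ∧ ∀ ρ ∈ S, g ρ ≠ 0 := by
  classical
  induction S using Finset.induction_on with
  | empty => exact ⟨f, hf, by simp, by simp⟩
  | insert ρ S hρ ih =>
    obtain ⟨g, hg, hfg, hg0⟩ := ih
    set P : ℂ → ℂ := fun w ↦ ∏ ρ ∈ S, (w - ρ) ^ analyticOrderNatAt f ρ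
    have hP : Differentiable ℂ P := by fun_prop
    have hPρ : P ρ ≠ 0 := Finset.prod_ne_zero_iff.2 fun σ hσ ↦
      pow_ne_zero _ (sub_ne_zero.2 fun h ↦ hρ (h ▸ hσ))
    have hord : analyticOrderAt f ρ = analyticOrderAt g ρ := by
      rw [show f = P * g from funext hfg, analyticOrderAt_mul (hP.analyticAt ρ) (hg.analyticAt ρ),
        (hP.analyticAt ρ).analyticOrderAt_eq_zero.2 hPρ, zero_add]
    obtain ⟨q, hq, hgq, hq0⟩ := exists_eq_sub_pow_mul hg (hord ▸ hne ρ)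
    refine ⟨q, hq, fun w ↦ ?_, fun σ hσ ↦ ?_⟩
    · rw [Finset.prod_insert hρ, hfg w, hgq w, analyticOrderNatAt, analyticOrderNatAt, hord]
      ring
    · rcases Finset.mem_insert.1 hσ with rfl | hσ
      · exact hq0
      · refine fun h0 ↦ hg0 σ hσ ?_
        rw [hgq, h0, mul_zero]

lemma logDeriv_prod_sub_pow_mul {g : ℂ → ℂ} (n : ℂ → ℕ) (S : Finset ℂ) {w : ℂ}
    (hg : DifferentiableAt ℂ g w) (hS : ∏ ρ ∈ S, (w - ρ) ^ n ρ ≠ 0) (hgw : g w ≠ 0) :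
    logDeriv (fun w ↦ (∏ ρ ∈ S, (w - ρ) ^ n ρ) * g w) w =
      ∑ ρ ∈ S, n ρ / (w - ρ) + logDeriv g w := by
  rw [logDeriv_mul w hS hgw (by fun_prop) hg,
    logDeriv_prod (Finset.prod_ne_zero_iff.1 hS) (by fun_prop)]
  congr! 2 with ρ
  rw [logDeriv_fun_pow (by fun_prop), logDeriv_apply, deriv_sub_const, deriv_id'', mul_one_div]

lemma exists_mul_logDeriv_eq_add_sum {f p : ℂ → ℂ} (hf : Differentiable ℂ f)
    (hne : ∀ z, analyticOrderAt f z ≠ ⊤) (hp : Differentiable ℂ p) (S : Finset ℂ)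
    (hS : ∀ ρ ∈ S, f ρ = 0) :
    ∃ F : ℂ → ℂ, (∀ w, (f w = 0 → w ∈ S) → DifferentiableAt ℂ F w) ∧ ∀ w, f w ≠ 0 →
      p w * logDeriv f w = F w + ∑ ρ ∈ S, analyticOrderNatAt f ρ * p ρ / (w - ρ) := by
  obtain ⟨g, hg, hfg, hg0⟩ := exists_eq_prod_mul hf hne S
  refine ⟨fun w ↦ p w * logDeriv g w + ∑ ρ ∈ S, analyticOrderNatAt f ρ * dslope p ρ w,
    fun w hw ↦ ?_, fun w hw ↦ ?_⟩
  · have hgw : g w ≠ 0 := fun h0 ↦ hg0 w (hw (by rw [hfg, h0, mul_zero])) h0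
    have hlog := (analyticAt_logDeriv (hg.analyticAt w) hgw).differentiableAt
    have hslope (ρ : ℂ) : Differentiable ℂ (dslope p ρ) :=
      differentiableOn_univ.1 ((differentiableOn_dslope univ_mem).2 hp.differentiableOn)
    fun_prop
  · have hne0 := hfg w ▸ hw
    rw [funext hfg, logDeriv_prod_sub_pow_mul _ S (hg w) (left_ne_zero_of_mul hne0)
      (right_ne_zero_of_mul hne0), ← funext hfg, mul_add, add_comm, add_assoc,
      ← Finset.sum_add_distrib, Finset.mul_sum]
    congr! 2 with ρ hρ
    have hwρ : w ≠ ρ := fun h ↦ hw (h ▸ hS ρ hρ)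
    rw [dslope_of_ne _ hwρ, slope_def_field]
    field_simp [sub_ne_zero.2 hwρ]
    ring

lemma circleIntegral_sub_inv_mul_sub_inv {R : ℝ} {a ρ : ℂ} (ha : a ∈ ball (0 : ℂ) R)
    (hρ : ρ ∈ ball (0 : ℂ) R) (h : a ≠ ρ) : ∮ w in C(0, R), (w - a)⁻¹ * (w - ρ)⁻¹ = 0 := by
  have hR : 0 < R := dist_nonneg.trans_lt ha
  have hne {b : ℂ} (hb : b ∈ ball (0 : ℂ) R) {w : ℂ} (hw : w ∈ sphere (0 : ℂ) R) : w - b ≠ 0 :=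
    sub_ne_zero.2 (ne_of_mem_of_not_mem hw (ne_of_lt hb))
  have hint {b : ℂ} (hb : b ∈ ball (0 : ℂ) R) : CircleIntegrable (fun w ↦ (w - b)⁻¹) 0 R :=
    ((continuousOn_id.sub continuousOn_const).inv₀ fun _ ↦ hne hb).circleIntegrable hR.le
  have hfrac : EqOn (fun w ↦ (w - a)⁻¹ * (w - ρ)⁻¹)
      (fun w ↦ (a - ρ)⁻¹ * ((w - a)⁻¹ - (w - ρ)⁻¹)) (sphere 0 R) := by
    intro w hw
    have := hne ha hw
    have := hne hρ hw
    have := sub_ne_zero.2 h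
    beta_reduce
    field_simp
    ring
  rw [circleIntegral.integral_congr hR.le hfrac, circleIntegral.integral_const_mul,
    circleIntegral.integral_sub (hint ha) (hint hρ),
    circleIntegral.integral_sub_inv_of_mem_ball ha, circleIntegral.integral_sub_inv_of_mem_ball hρ,
    sub_self, mul_zero]

lemma circleIntegral_sub_inv_mul_add_sum {F c : ℂ → ℂ} {R : ℝ} {S : Finset ℂ} {a : ℂ}
    (hF : ∀ w ∈ closedBall 0 R, DifferentiableAt ℂ F w) (hS : ∀ ρ ∈ S, ρ ∈ ball 0 R)
    (ha : a ∈ ball 0 R) (haS : a ∉ S) :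
    ∮ w in C(0, R), (w - a)⁻¹ * (F w + ∑ ρ ∈ S, c ρ / (w - ρ)) = 2 * Real.pi * I * F a := by
  have hR : 0 < R := dist_nonneg.trans_lt ha
  have hinv {b : ℂ} (hb : b ∈ ball (0 : ℂ) R) : ContinuousOn (fun w ↦ (w - b)⁻¹) (sphere 0 R) :=
    (continuousOn_id.sub continuousOn_const).inv₀ fun w hw ↦
      sub_ne_zero.2 (ne_of_mem_of_not_mem hw (ne_of_lt hb))
  have hFc : ContinuousOn F (closedBall 0 R) := fun w hw ↦ (hF w hw).continuousAt.continuousWithinAt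
  have hFint : CircleIntegrable (fun w ↦ (w - a)⁻¹ * F w) 0 R :=
    ((hinv ha).mul (hFc.mono sphere_subset_closedBall)).circleIntegrable hR.le
  have hterm : ∀ ρ ∈ S, CircleIntegrable (fun w ↦ c ρ * ((w - a)⁻¹ * (w - ρ)⁻¹)) 0 R :=
    fun ρ hρ ↦ (continuousOn_const.mul ((hinv ha).mul (hinv (hS ρ hρ)))).circleIntegrable hR.le
  have hexpand : (fun w ↦ (w - a)⁻¹ * (F w + ∑ ρ ∈ S, c ρ / (w - ρ))) =
      fun w ↦ (w - a)⁻¹ * F w + ∑ ρ ∈ S, c ρ * ((w - a)⁻¹ * (w - ρ)⁻¹) := by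
    funext w
    rw [mul_add, Finset.mul_sum]
    congr! 2
    ring
  have hcauchy : ∮ w in C(0, R), (w - a)⁻¹ * F w = 2 * Real.pi * I * F a :=
    circleIntegral_sub_inv_smul_of_differentiable_on_off_countable countable_empty ha hFc
      fun w hw ↦ hF w (ball_subset_closedBall hw.1)
  rw [hexpand, circleIntegral.integral_add hFint (CircleIntegrable.fun_sum S hterm), hcauchy,
    circleIntegral.integral_fun_sum hterm, Finset.sum_eq_zero, add_zero]
  intro ρ hρ
  rw [circleIntegral.integral_const_mul, circleIntegral_sub_inv_mul_sub_inv ha (hS ρ hρ)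
    (fun h ↦ haS (h ▸ hρ)), mul_zero]

lemma circleIntegral_sub_inv_mul_logDeriv {f p : ℂ → ℂ} (hf : Differentiable ℂ f)
    (hne : ∀ z, analyticOrderAt f z ≠ ⊤) (hp : Differentiable ℂ p) {R : ℝ} {S : Finset ℂ}
    (hSR : ∀ ρ ∈ S, ρ ∈ ball 0 R) (hS : ∀ ρ ∈ S, f ρ = 0)
    (hfS : ∀ w ∈ closedBall 0 R, f w = 0 → w ∈ S) {a : ℂ} (ha : a ∈ ball 0 R) (ha0 : f a ≠ 0) :
    ∮ w in C(0, R), (w - a)⁻¹ * (p w * logDeriv f w) =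
      2 * Real.pi * I * (p a * logDeriv f a - ∑ ρ ∈ S, analyticOrderNatAt f ρ * p ρ / (a - ρ)) := by
  have hR : 0 < R := dist_nonneg.trans_lt ha
  obtain ⟨F, hF, hdec⟩ := exists_mul_logDeriv_eq_add_sum hf hne hp S hS
  have hsphere : EqOn (fun w ↦ (w - a)⁻¹ * (p w * logDeriv f w))
      (fun w ↦ (w - a)⁻¹ * (F w + ∑ ρ ∈ S, analyticOrderNatAt f ρ * p ρ / (w - ρ)))
      (sphere 0 R) := fun w hw ↦ by
    have hw0 : f w ≠ 0 := fun h0 ↦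
      (ne_of_lt (hSR w (hfS w (sphere_subset_closedBall hw) h0))) hw
    beta_reduce
    rw [hdec w hw0]
  rw [circleIntegral.integral_congr hR.le hsphere, circleIntegral_sub_inv_mul_add_sum
    (fun w hw ↦ hF w (hfS w hw)) hSR ha (fun h ↦ ha0 (hS a h)), hdec a ha0, add_sub_cancel_right]

end Contour

section Xi

open Complex Set

/-- The entire function `s (s - 1) Λ(s)` of `s = 1/2 + w`, where `Λ` is the completed Riemann zeta
function: twice Riemann's `ξ`, recentred at the symmetry point so that it is even. It is written
with `completedRiemannZeta₀` because the division in `completedRiemannZeta` gives wrong values at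
the poles of `Λ`. -/
noncomputable def centeredXi (w : ℂ) : ℂ :=
  (1 / 2 + w) * (w - 1 / 2) * completedRiemannZeta₀ (1 / 2 + w) + 1

lemma differentiable_centeredXi : Differentiable ℂ centeredXi := by
  have := differentiable_completedZeta₀
  unfold centeredXi
  fun_prop

lemma centeredXi_neg (w : ℂ) : centeredXi (-w) = centeredXi w := by
  have hsymm := completedRiemannZeta₀_one_sub (1 / 2 + w)
  rw [show 1 - (1 / 2 + w) = 1 / 2 + -w by ring] at hsymm
  rw [centeredXi, centeredXi, hsymm]
  ring

lemma logDeriv_centeredXi_neg (w : ℂ) : logDeriv centeredXi (-w) = -logDeriv centeredXi w := by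
  have hderiv : deriv (fun w ↦ centeredXi (-w)) w = deriv centeredXi w := by
    rw [funext centeredXi_neg]
  rw [deriv_comp_neg] at hderiv
  rw [logDeriv_apply, logDeriv_apply, centeredXi_neg, ← hderiv, neg_div, neg_neg]

lemma half_add_re_pos {w : ℂ} (hw : -1 / 2 < w.re) : 0 < (1 / 2 + w).re := by
  rw [add_re, show ((1 / 2 : ℂ)).re = 1 / 2 by norm_num]
  linarith

lemma Gammaℝ_mul_riemannZeta₁ {s : ℂ} (hs : 0 < s.re) (hs1 : s ≠ 1) :
    Gammaℝ s * riemannZeta₁ s = (s - 1) * completedRiemannZeta s := by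
  have hζ := riemannZeta_def_of_ne_zero (ne_zero_of_re_pos hs)
  rw [riemannZeta_eq_inv_sub_mul hs1, eq_div_iff (Gammaℝ_ne_zero_of_re_pos hs)] at hζ
  rw [← hζ]
  field_simp [sub_ne_zero.2 hs1]

lemma centeredXi_eq {w : ℂ} (hw : -1 / 2 < w.re) :
    centeredXi w = (1 / 2 + w) * Gammaℝ (1 / 2 + w) * riemannZeta₁ (1 / 2 + w) := by
  have hre := half_add_re_pos hw
  rw [centeredXi, show w - 1 / 2 = 1 / 2 + w - 1 by ring]
  set s := 1 / 2 + w
  have hs0 := ne_zero_of_re_pos hre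
  rcases eq_or_ne s 1 with hs1 | hs1
  · simp [hs1, Gammaℝ_one]
  · have hs1' : s - 1 ≠ 0 := sub_ne_zero.2 hs1
    rw [mul_assoc, mul_assoc, Gammaℝ_mul_riemannZeta₁ hre hs1, completedRiemannZeta_eq,
      ← neg_sub s 1, div_neg]
    field_simp
    ring

lemma centeredXi_half : centeredXi (1 / 2) = 1 := by
  simp [centeredXi]

lemma analyticOrderAt_centeredXi_ne_top (z : ℂ) : analyticOrderAt centeredXi z ≠ ⊤ :=
  analyticOrderAt_ne_top_of_differentiable differentiable_centeredXi
    (centeredXi_half ▸ one_ne_zero) z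

lemma analyticAt_Gammaℝ {s : ℂ} (hs : 0 < s.re) : AnalyticAt ℂ Gammaℝ s := by
  have hinv := (differentiable_Gammaℝ_inv.analyticAt s).inv
    (inv_ne_zero (Gammaℝ_ne_zero_of_re_pos hs))
  rwa [show (fun s ↦ (Gammaℝ s)⁻¹)⁻¹ = Gammaℝ from funext fun s ↦ inv_inv _] at hinv

lemma centeredXi_eventuallyEq {w : ℂ} (hw : -1 / 2 < w.re) :
    centeredXi =ᶠ[𝓝 w] (fun s ↦ s * Gammaℝ s * riemannZeta₁ s) ∘ (1 / 2 + ·) := by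
  filter_upwards [(isOpen_re_gt _).mem_nhds hw] with z hz using centeredXi_eq hz

lemma analyticOrderNatAt_centeredXi (τ : ℝ) :
    analyticOrderNatAt centeredXi (I * τ) = zetaMult τ := by
  have hτ : -1 / 2 < (I * τ).re := by norm_num
  have hre := half_add_re_pos hτ
  have hΓ : AnalyticAt ℂ (fun s ↦ s * Gammaℝ s) (1 / 2 + I * τ) :=
    analyticAt_id.mul (analyticAt_Gammaℝ hre)
  have hΓ0 : (1 / 2 + I * τ) * Gammaℝ (1 / 2 + I * τ) ≠ 0 :=
    mul_ne_zero (ne_zero_of_re_pos hre) (Gammaℝ_ne_zero_of_re_pos hre)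
  have hζ := differentiable_riemannZeta₁.analyticAt (1 / 2 + I * τ)
  rw [zetaMult, analyticOrderNatAt, analyticOrderNatAt,
    analyticOrderAt_congr (centeredXi_eventuallyEq hτ),
    analyticOrderAt_comp_of_deriv_ne_zero (by fun_prop) (by simp),
    show (fun s ↦ s * Gammaℝ s * riemannZeta₁ s) = (fun s ↦ s * Gammaℝ s) * riemannZeta₁ from rfl,
    analyticOrderAt_mul hΓ hζ, hΓ.analyticOrderAt_eq_zero.2 hΓ0, zero_add]

lemma logDeriv_Gammaℝ {s : ℂ} (hs : 0 < s.re) :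
    logDeriv Gammaℝ s = -(Real.log Real.pi / 2 : ℝ) + digamma (s / 2) / 2 := by
  have hs2 : 0 < (s / 2).re := by simpa using hs
  have hpi : (Real.pi : ℂ) ≠ 0 := by simp [Real.pi_ne_zero]
  have hpow : HasDerivAt (fun s : ℂ ↦ (Real.pi : ℂ) ^ (-s / 2))
      ((Real.pi : ℂ) ^ (-s / 2) * log Real.pi * (-1 / 2)) s :=
    ((hasDerivAt_id s).neg.div_const 2).const_cpow (Or.inl hpi)
  have hpow0 : (Real.pi : ℂ) ^ (-s / 2) ≠ 0 := fun h ↦ hpi ((cpow_eq_zero_iff _ _).1 h).1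
  have hΓ : HasDerivAt (fun s : ℂ ↦ Gamma (s / 2)) (deriv Gamma (s / 2) * (1 / 2)) s :=
    (differentiableAt_Gamma _ (ne_neg_natCast_of_re_pos hs2)).hasDerivAt.comp s
      ((hasDerivAt_id s).div_const 2)
  have hΓ0 := Gamma_ne_zero_of_re_pos hs2
  rw [funext Gammaℝ_def, logDeriv_mul (f := fun s : ℂ ↦ (Real.pi : ℂ) ^ (-s / 2))
      (g := fun s : ℂ ↦ Gamma (s / 2)) s hpow0 hΓ0 hpow.differentiableAt hΓ.differentiableAt,
    logDeriv_apply, logDeriv_apply, hpow.deriv, hΓ.deriv, digamma_def, logDeriv_apply,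
    ← ofReal_log Real.pi_pos.le]
  push_cast
  field_simp

lemma logDeriv_centeredXi {w : ℂ} (hw : -1 / 2 < w.re) (hζ : riemannZeta₁ (1 / 2 + w) ≠ 0) :
    logDeriv centeredXi w = 1 / (1 / 2 + w) - (Real.log Real.pi / 2 : ℝ) +
      digamma ((1 / 2 + w) / 2) / 2 + logDeriv riemannZeta₁ (1 / 2 + w) := by
  have hre := half_add_re_pos hw
  have hne := ne_zero_of_re_pos hre
  have hΓ := (analyticAt_Gammaℝ hre).differentiableAt
  have hΓ0 := Gammaℝ_ne_zero_of_re_pos hre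
  have hζd := differentiable_riemannZeta₁ (1 / 2 + w)
  have hshift : deriv (1 / 2 + · : ℂ → ℂ) w = 1 := by simp
  rw [(logDeriv_congr_nhds (centeredXi_eventuallyEq hw)).eq_of_nhds,
    logDeriv_comp (by fun_prop) (by fun_prop), hshift, mul_one,
    logDeriv_mul (f := fun s ↦ s * Gammaℝ s) _ (mul_ne_zero hne hΓ0) hζ (by fun_prop) hζd,
    logDeriv_mul (f := fun s ↦ s) _ hne hΓ0 (by fun_prop) hΓ, logDeriv_Gammaℝ hre,
    logDeriv_apply (fun s ↦ s), deriv_id'', ← add_assoc, ← sub_eq_add_neg]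

lemma SignHypothesis.centeredXi_ne_zero {ε C : ℝ} (h : SignHypothesis ε C) {w : ℂ}
    (hw : w.re ≠ 0) : centeredXi w ≠ 0 := by
  wlog hpos : 0 < w.re generalizing w with H
  · rw [← centeredXi_neg]
    refine H (by simpa using hw) ?_
    simpa using lt_of_le_of_ne (not_lt.1 hpos) hw
  have hw' : -1 / 2 < w.re := by linarith
  have hre := half_add_re_pos hw'
  rw [centeredXi_eq hw']
  exact mul_ne_zero (mul_ne_zero (ne_zero_of_re_pos hre) (Gammaℝ_ne_zero_of_re_pos hre))
    (h.riemannZeta₁_ne_zero (by simpa using hpos))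

end Xi

section XiBound

open Complex

lemma exists_norm_logDeriv_riemannZeta₁_le_of_two_lt_re : ∃ K, 0 ≤ K ∧ ∀ s : ℂ, 2 < s.re →
    ‖logDeriv riemannZeta₁ s‖ ≤ K := by
  obtain ⟨K, hK, hζ⟩ := exists_norm_logDeriv_riemannZeta_le
  refine ⟨K * 2 + 1, by positivity, fun s hs ↦ ?_⟩
  have hre : 1 ≤ s.re - 1 := by linarith
  have hs1 : s ≠ 1 := by
    rintro rfl
    norm_num at hs
  have hnorm : 1 ≤ ‖s - 1‖ := hre.trans (by simpa using re_le_norm (s - 1))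
  have hsplit : logDeriv riemannZeta₁ s = logDeriv riemannZeta s + 1 / (s - 1) := by
    rw [logDeriv_riemannZeta_eq hs1 (riemannZeta₁_ne_zero_of_one_le_re (by linarith)),
      sub_add_cancel]
  calc ‖logDeriv riemannZeta₁ s‖ ≤ ‖logDeriv riemannZeta s‖ + ‖1 / (s - 1)‖ :=
        hsplit ▸ norm_add_le _ _
    _ ≤ K * (1 + 1 / (s.re - 1)) + 1 := by
        refine add_le_add (hζ s (by linarith)) ?_
        rw [norm_div, norm_one]
        exact div_le_one_of_le₀ hnorm (norm_nonneg _)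
    _ ≤ K * 2 + 1 := by
        have := div_le_one_of_le₀ hre (by linarith)
        gcongr
        linarith

lemma norm_half_add_le (w : ℂ) : ‖1 / 2 + w‖ ≤ 1 / 2 + ‖w‖ :=
  (norm_add_le _ _).trans_eq (by norm_num)

lemma exists_norm_archimedean_logDeriv_le : ∃ K, 0 ≤ K ∧ ∀ w : ℂ, 0 < w.re →
    ‖1 / (1 / 2 + w) - (Real.log Real.pi / 2 : ℝ) + digamma ((1 / 2 + w) / 2) / 2‖ ≤
      K * √(1 + ‖w‖) := by
  obtain ⟨K, hK, hψ⟩ := exists_norm_digamma_le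
  set c := |Real.log Real.pi / 2|
  refine ⟨2 + c + K, by positivity, fun w hw ↦ ?_⟩
  set s := 1 / 2 + w with hs
  set Y := √(1 + ‖w‖)
  have hY : 1 ≤ Y := Real.one_le_sqrt.2 (le_add_of_nonneg_right (norm_nonneg w))
  have hsre : s.re = 1 / 2 + w.re := by simp [hs]
  have hs2 : 1 / 2 ≤ ‖s‖ := le_trans (by linarith) (re_le_norm s)
  have hinv : ‖1 / s‖ ≤ 2 := by
    rw [norm_div, norm_one, div_le_iff₀ (by linarith)]
    linarith
  have hsqrt : √‖s / 2‖ ≤ Y := by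
    refine Real.sqrt_le_sqrt ?_
    rw [norm_div, norm_ofNat]
    linarith [norm_half_add_le w, norm_nonneg w]
  have hψs : ‖digamma (s / 2) / 2‖ ≤ K * Y := calc
    ‖digamma (s / 2) / 2‖ = ‖digamma (s / 2)‖ / 2 := by rw [norm_div, norm_ofNat]
    _ ≤ K * (1 + √‖s / 2‖) / 2 := by
        gcongr
        refine hψ _ ?_
        rw [div_ofNat_re]
        linarith
    _ ≤ K * (Y + Y) / 2 := by gcongr
    _ = K * Y := by ring
  calc ‖1 / s - (Real.log Real.pi / 2 : ℝ) + digamma (s / 2) / 2‖ ≤ 2 + c + K * Y :=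
        norm_add_le_of_le (norm_sub_le_of_le hinv (norm_real _).le) hψs
    _ ≤ (2 + c) * Y + K * Y := by
        gcongr
        exact le_mul_of_one_le_right (by positivity) hY
    _ = (2 + c + K) * Y := by ring

namespace SignHypothesis

variable {ε C : ℝ} (h : SignHypothesis ε C)
include h

lemma exists_re_mul_norm_logDeriv_riemannZeta₁_le : ∃ K, 0 ≤ K ∧ ∀ w : ℂ, 0 < w.re →
    w.re * ‖logDeriv riemannZeta₁ (1 / 2 + w)‖ ≤ K * (1 + ‖w‖) := by
  obtain ⟨K₁, hK₁, hfar⟩ := exists_norm_logDeriv_riemannZeta₁_le_of_two_lt_re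
  obtain ⟨K₂, hK₂, hnear⟩ := h.exists_norm_logDeriv_riemannZeta₁_le
  refine ⟨K₁ + 5 * K₂, by positivity, fun w hw ↦ ?_⟩
  set X := 1 + ‖w‖
  have : 0 ≤ X := by positivity
  have hwX : w.re ≤ X := by linarith [re_le_norm w]
  set s := 1 / 2 + w with hs
  have hsre : s.re = 1 / 2 + w.re := by simp [hs]
  rcases lt_or_ge 2 s.re with hs2 | hs2
  · calc w.re * ‖logDeriv riemannZeta₁ s‖ ≤ X * K₁ := by gcongr; exact hfar s hs2
      _ ≤ X * K₁ + 5 * K₂ * X := le_add_of_nonneg_right (by positivity)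
      _ = (K₁ + 5 * K₂) * X := by ring
  · have hsX : 1 + ‖s‖ ≤ 2 * X := by linarith [norm_half_add_le w, norm_nonneg w]
    calc w.re * ‖logDeriv riemannZeta₁ s‖
        ≤ w.re * (K₂ * (1 + ‖s‖) * (1 + 1 / (s.re - 1 / 2))) := by
          gcongr
          exact hnear s (by linarith)
      _ = K₂ * (1 + ‖s‖) * (w.re + 1) := by
          rw [hsre, add_sub_cancel_left]
          field_simp
      _ ≤ K₂ * (2 * X) * (5 / 2) := by gcongr; linarith
      _ ≤ K₂ * (2 * X) * (5 / 2) + K₁ * X := le_add_of_nonneg_right (by positivity)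
      _ = (K₁ + 5 * K₂) * X := by ring

lemma exists_abs_re_mul_norm_logDeriv_centeredXi_le : ∃ K, 0 ≤ K ∧ ∀ w : ℂ, w.re ≠ 0 →
    |w.re| * ‖logDeriv centeredXi w‖ ≤ K * ((1 + ‖w‖) * √(1 + ‖w‖)) := by
  obtain ⟨K₁, hK₁, harch⟩ := exists_norm_archimedean_logDeriv_le
  obtain ⟨K₂, hK₂, hζ⟩ := h.exists_re_mul_norm_logDeriv_riemannZeta₁_le
  refine ⟨K₁ + K₂, by positivity, fun w hw ↦ ?_⟩
  wlog hpos : 0 < w.re generalizing w with H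
  · have hneg : w.re < 0 := lt_of_le_of_ne (not_lt.1 hpos) hw
    simpa [logDeriv_centeredXi_neg] using H (-w) (by simpa using hw) (by simpa using hneg)
  rw [abs_of_pos hpos, logDeriv_centeredXi (by linarith)
    (h.riemannZeta₁_ne_zero (by simpa using hpos))]
  have hζw := hζ w hpos
  have harchw := harch w hpos
  set L := logDeriv riemannZeta₁ (1 / 2 + w)
  set A := 1 / (1 / 2 + w) - (Real.log Real.pi / 2 : ℝ) + digamma ((1 / 2 + w) / 2) / 2
  set X := 1 + ‖w‖
  have hX1 : 1 ≤ X := le_add_of_nonneg_right (norm_nonneg w)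
  have hwX : w.re ≤ X := by linarith [re_le_norm w]
  calc w.re * ‖A + L‖ ≤ w.re * (‖A‖ + ‖L‖) := by gcongr; exact norm_add_le _ _
    _ = w.re * ‖A‖ + w.re * ‖L‖ := mul_add ..
    _ ≤ X * (K₁ * √X) + K₂ * (X * √X) := by
        refine add_le_add (by gcongr) (hζw.trans ?_)
        gcongr
        exact le_mul_of_one_le_right (by positivity) (Real.one_le_sqrt.2 hX1)
    _ = (K₁ + K₂) * (X * √X) := by ring

end SignHypothesis

lemma tendsto_re_logDeriv_centeredXi :
    Tendsto (fun σ : ℝ ↦ (logDeriv centeredXi σ).re) atTop atTop := by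
  obtain ⟨K, -, hζ⟩ := exists_norm_logDeriv_riemannZeta₁_le_of_two_lt_re
  have hlog : Tendsto (fun σ : ℝ ↦ Real.log (σ / 2 - 3 / 4) / 2 - Real.log Real.pi / 2 - K)
      atTop atTop := by
    have hlin : Tendsto (fun σ : ℝ ↦ σ / 2 - 3 / 4) atTop atTop :=
      tendsto_atTop_add_const_right _ _ (tendsto_id.atTop_div_const (by norm_num))
    exact tendsto_atTop_add_const_right _ _ (tendsto_atTop_add_const_right _ _
      ((Real.tendsto_log_atTop.comp hlin).atTop_div_const (by norm_num)))
  refine tendsto_atTop_mono' _ ?_ hlog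
  filter_upwards [eventually_gt_atTop 2] with σ hσ
  have hre : (1 / 2 + σ : ℂ).re = 1 / 2 + σ := by simp
  have hζσ := (abs_le.1 ((abs_re_le_norm _).trans (hζ (1 / 2 + σ) (by linarith)))).1
  have hψ := log_le_digamma_ofReal_add_one_re (x := σ / 2 - 3 / 4) (by linarith)
  have hinv : 0 ≤ (1 / (1 / 2 + σ : ℂ)).re := by
    rw [one_div, inv_re, hre]
    exact div_nonneg (by linarith) (normSq_nonneg _)
  rw [logDeriv_centeredXi (by rw [ofReal_re]; linarith)
      (riemannZeta₁_ne_zero_of_one_le_re (by linarith)),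
    show (1 / 2 + (σ : ℂ)) / 2 = ((σ / 2 - 3 / 4 + 1 : ℝ) : ℂ) by push_cast; ring,
    add_re, add_re, sub_re, div_ofNat_re, ofReal_re]
  linarith

end XiBound

section XiZeros

open Complex Metric

lemma finite_inter_zeros_of_isCompact {f : ℂ → ℂ} (hf : Differentiable ℂ f)
    (hne : ∀ z, analyticOrderAt f z ≠ ⊤) {K : Set ℂ} (hK : IsCompact K) :
    {z ∈ K | f z = 0}.Finite := by
  by_contra hinf
  obtain ⟨z, -, hz⟩ := Set.Infinite.exists_accPt_of_subset_isCompact hinf hK (Set.sep_subset _ _)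
  rw [accPt_iff_frequently_nhdsNE] at hz
  refine hne z (analyticOrderAt_eq_top.2 ?_)
  exact (hf.analyticAt z).frequently_zero_iff_eventually_zero.1 (hz.mono fun w hw ↦ hw.2)

lemma centeredXi_I_mul_eq_zero_iff {γ : ℝ} : centeredXi (I * γ) = 0 ↔ zetaMult γ ≠ 0 := by
  rw [← analyticOrderNatAt_centeredXi,
    ← (differentiable_centeredXi.analyticAt _).analyticOrderAt_ne_zero, analyticOrderNatAt,
    Ne, Ne, ENat.toNat_eq_zero]
  simp only [analyticOrderAt_centeredXi_ne_top, or_false]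

lemma finite_zetaMult_ne_zero (R : ℝ) : {γ : ℝ | zetaMult γ ≠ 0 ∧ |γ| ≤ R}.Finite := by
  refine Set.Finite.of_injOn (f := fun γ : ℝ ↦ I * γ)
    (t := {z ∈ closedBall (0 : ℂ) R | centeredXi z = 0}) ?_ (fun x _ y _ hxy ↦ by simpa using hxy)
    (finite_inter_zeros_of_isCompact differentiable_centeredXi analyticOrderAt_centeredXi_ne_top
      (isCompact_closedBall 0 R))
  rintro γ ⟨hγ, hγR⟩
  exact ⟨by simpa using hγR, centeredXi_I_mul_eq_zero_iff.2 hγ⟩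

/-- The ordinates `γ` with `|γ| ≤ R` of the zeros `1 / 2 + I * γ` of `riemannZeta₁` on the critical
line, listed without multiplicity. -/
noncomputable def zeroOrdinates (R : ℝ) : Finset ℝ := (finite_zetaMult_ne_zero R).toFinset

lemma mem_zeroOrdinates {R γ : ℝ} : γ ∈ zeroOrdinates R ↔ zetaMult γ ≠ 0 ∧ |γ| ≤ R :=
  (finite_zetaMult_ne_zero R).mem_toFinset

lemma exists_zetaMult_eq_zero (N : ℝ) : ∃ R, N ≤ R ∧ ∀ γ : ℝ, |γ| = R → zetaMult γ = 0 := by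
  obtain ⟨R, hR, hRA⟩ := (Set.Icc_infinite (lt_add_one N)).exists_notMem_finset
    ((zeroOrdinates (N + 1)).image fun γ ↦ |γ|)
  refine ⟨R, hR.1, fun γ hγ ↦ ?_⟩
  by_contra hγ0
  exact hRA (Finset.mem_image.2 ⟨γ, mem_zeroOrdinates.2 ⟨hγ0, hγ ▸ hR.2⟩, hγ⟩)

lemma SignHypothesis.centeredXi_eq_zero_iff {ε C : ℝ} (h : SignHypothesis ε C) {w : ℂ} :
    centeredXi w = 0 ↔ ∃ γ : ℝ, zetaMult γ ≠ 0 ∧ I * γ = w := by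
  refine ⟨fun hw ↦ ?_, fun ⟨γ, hγ, hγw⟩ ↦ hγw ▸ centeredXi_I_mul_eq_zero_iff.2 hγ⟩
  have hre : w.re = 0 := by_contra fun hre ↦ h.centeredXi_ne_zero hre hw
  have hIm : I * (w.im : ℂ) = w := by apply Complex.ext <;> simp [hre]
  exact ⟨w.im, centeredXi_I_mul_eq_zero_iff.1 (hIm.symm ▸ hw), hIm⟩

end XiZeros

section XiContour

open Complex Metric

lemma inv_sub_sub_inv_add {a w : ℂ} (hwa : w - a ≠ 0) (hwa' : w - -a ≠ 0) :
    (w - a)⁻¹ - (w - -a)⁻¹ = 2 * a / (w ^ 2 - a ^ 2) := by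
  rw [show w ^ 2 - a ^ 2 = (w - a) * (w - -a) by ring]
  field_simp
  ring

lemma norm_two_mul_div_sq_sub_sq_le {R σ : ℝ} (hσ : 0 < σ) (hσR : σ < R) {w : ℂ} (hw : ‖w‖ = R) :
    ‖2 * σ / (w ^ 2 - σ ^ 2)‖ ≤ 2 * σ / (R ^ 2 - σ ^ 2) := by
  have hdenom : R ^ 2 - σ ^ 2 ≤ ‖w ^ 2 - (σ : ℂ) ^ 2‖ := by
    refine le_trans (le_of_eq ?_) (norm_sub_norm_le _ _)
    rw [norm_pow, norm_pow, hw, Complex.norm_of_nonneg hσ.le]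
  rw [norm_div, norm_mul, norm_ofNat, Complex.norm_of_nonneg hσ.le]
  have : 0 < R ^ 2 - σ ^ 2 := by nlinarith
  gcongr

lemma norm_one_add_sq_div_sq {R : ℝ} (hR : 0 < R) {w : ℂ} (hw : ‖w‖ = R) :
    ‖1 + w ^ 2 / (R : ℂ) ^ 2‖ = 2 * |w.re| / R := by
  have hR0 : (R : ℂ) ≠ 0 := ofReal_ne_zero.2 hR.ne'
  have hconj : w * (starRingEnd ℂ) w = (R : ℂ) ^ 2 := by
    rw [mul_conj, normSq_eq_norm_sq, hw, ofReal_pow]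
  have hfactor : 1 + w ^ 2 / (R : ℂ) ^ 2 = w * (2 * w.re : ℝ) / (R : ℂ) ^ 2 := by
    rw [← add_conj, mul_add, hconj]
    field_simp
    ring
  rw [hfactor, norm_div, norm_mul, hw, norm_real, norm_pow, Complex.norm_of_nonneg hR.le,
    Real.norm_eq_abs, abs_mul, abs_two]
  field_simp

lemma circleIntegral_mul_logDeriv {f p : ℂ → ℂ} (hf : Differentiable ℂ f)
    (hne : ∀ z, analyticOrderAt f z ≠ ⊤) (hp : Differentiable ℂ p) {R : ℝ} {S : Finset ℂ}
    (hSR : ∀ ρ ∈ S, ρ ∈ ball 0 R) (hS : ∀ ρ ∈ S, f ρ = 0)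
    (hfS : ∀ w ∈ closedBall 0 R, f w = 0 → w ∈ S) {a : ℂ} (ha : a ∈ ball 0 R)
    (ha0 : f a ≠ 0) (hna0 : f (-a) ≠ 0) :
    ∮ w in C(0, R), 2 * a / (w ^ 2 - a ^ 2) * (p w * logDeriv f w) =
      2 * Real.pi * I * (p a * logDeriv f a - p (-a) * logDeriv f (-a) +
        ∑ ρ ∈ S, analyticOrderNatAt f ρ * p ρ * (2 * a / (ρ ^ 2 - a ^ 2))) := by
  have hR : 0 ≤ R := (pos_of_mem_ball ha).le
  have hna : -a ∈ ball 0 R := by simpa using ha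
  have hsub {b w : ℂ} (hb : b ∈ ball 0 R) (hw : w ∈ sphere 0 R) : w - b ≠ 0 :=
    sub_ne_zero.2 (ne_of_mem_of_not_mem hw (ne_of_lt hb))
  have hcont : ContinuousOn (fun w ↦ p w * logDeriv f w) (sphere 0 R) := by
    refine hp.continuous.continuousOn.mul fun w hw ↦ ?_
    have hfw : f w ≠ 0 := fun hw0 ↦
      (hSR w (hfS w (sphere_subset_closedBall hw) hw0)).ne hw
    exact (analyticAt_logDeriv (hf.analyticAt w) hfw).continuousAt.continuousWithinAt
  have hint {b : ℂ} (hb : b ∈ ball 0 R) :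
      CircleIntegrable (fun w ↦ (w - b)⁻¹ * (p w * logDeriv f w)) 0 R :=
    (((continuousOn_id.sub continuousOn_const).inv₀ fun w hw ↦ hsub hb hw).mul
      hcont).circleIntegrable hR
  have hsplit : ∮ w in C(0, R), 2 * a / (w ^ 2 - a ^ 2) * (p w * logDeriv f w) =
      ∮ w in C(0, R), (w - a)⁻¹ * (p w * logDeriv f w) - (w - -a)⁻¹ * (p w * logDeriv f w) := by
    refine circleIntegral.integral_congr hR fun w hw ↦ ?_
    rw [← sub_mul, inv_sub_sub_inv_add (hsub ha hw) (hsub hna hw)]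
  rw [hsplit, circleIntegral.integral_sub (hint ha) (hint hna),
    circleIntegral_sub_inv_mul_logDeriv hf hne hp hSR hS hfS ha ha0,
    circleIntegral_sub_inv_mul_logDeriv hf hne hp hSR hS hfS hna hna0, ← mul_sub]
  congr 1
  have hterm (ρ : ℂ) (hρ : ρ ∈ S) : analyticOrderNatAt f ρ * p ρ * (2 * a / (ρ ^ 2 - a ^ 2)) =
      analyticOrderNatAt f ρ * p ρ / (-a - ρ) - analyticOrderNatAt f ρ * p ρ / (a - ρ) := by
    have hρa : ρ - a ≠ 0 := sub_ne_zero.2 fun hρa ↦ ha0 (hρa ▸ hS ρ hρ)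
    have hρa' : ρ - -a ≠ 0 := sub_ne_zero.2 fun hρa ↦ hna0 (hρa ▸ hS ρ hρ)
    rw [← inv_sub_sub_inv_add hρa hρa', ← neg_sub ρ a, ← neg_sub ρ (-a), div_neg, div_neg]
    ring
  rw [Finset.sum_congr rfl hterm, Finset.sum_sub_distrib]
  ring

namespace SignHypothesis

variable {ε C : ℝ} (h : SignHypothesis ε C)
include h

lemma circleIntegral_logDeriv_centeredXi {R σ : ℝ} (hσ : 0 < σ) (hσR : σ < R)
    (hR : ∀ γ : ℝ, |γ| = R → zetaMult γ = 0) :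
    ∮ w in C(0, R), 2 * σ / (w ^ 2 - σ ^ 2) * ((1 + w ^ 2 / R ^ 2) * logDeriv centeredXi w) =
      2 * Real.pi * I * (2 * σ * ((1 + σ ^ 2 / R ^ 2) * (logDeriv centeredXi σ / σ) -
        ∑ γ ∈ zeroOrdinates R, (zetaMult γ * (1 - γ ^ 2 / R ^ 2) / (σ ^ 2 + γ ^ 2) : ℂ))) := by
  set S : Finset ℂ := (zeroOrdinates R).image fun γ : ℝ ↦ I * γ with hSdef
  have hSR : ∀ ρ ∈ S, ρ ∈ ball (0 : ℂ) R := by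
    intro ρ hρ
    obtain ⟨γ, hγ, rfl⟩ := Finset.mem_image.1 hρ
    obtain ⟨hγ0, hγR⟩ := mem_zeroOrdinates.1 hγ
    simpa using lt_of_le_of_ne hγR fun hγR ↦ hγ0 (hR γ hγR)
  have hS : ∀ ρ ∈ S, centeredXi ρ = 0 := by
    intro ρ hρ
    obtain ⟨γ, hγ, rfl⟩ := Finset.mem_image.1 hρ
    exact centeredXi_I_mul_eq_zero_iff.2 (mem_zeroOrdinates.1 hγ).1
  have hxiS : ∀ w ∈ closedBall (0 : ℂ) R, centeredXi w = 0 → w ∈ S := by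
    intro w hw hw0
    obtain ⟨γ, hγ, rfl⟩ := h.centeredXi_eq_zero_iff.1 hw0
    exact Finset.mem_image_of_mem _ (mem_zeroOrdinates.2 ⟨hγ, by simpa using hw⟩)
  have hσ0 : centeredXi σ ≠ 0 := h.centeredXi_ne_zero (by simpa using hσ.ne')
  have hσball : (σ : ℂ) ∈ ball (0 : ℂ) R := by simpa [abs_of_pos hσ] using hσR
  have hterm (γ : ℝ) : analyticOrderNatAt centeredXi (I * γ) * (1 + (I * γ) ^ 2 / (R : ℂ) ^ 2) *
      (2 * σ / ((I * γ) ^ 2 - (σ : ℂ) ^ 2)) =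
      -(2 * σ * (zetaMult γ * (1 - γ ^ 2 / R ^ 2) / (σ ^ 2 + γ ^ 2))) := by
    rw [analyticOrderNatAt_centeredXi, mul_pow, I_sq, neg_one_mul, neg_div, ← sub_eq_add_neg,
      ← neg_add', div_neg, add_comm ((γ : ℂ) ^ 2)]
    ring
  rw [circleIntegral_mul_logDeriv (p := fun w ↦ 1 + w ^ 2 / R ^ 2) differentiable_centeredXi
    analyticOrderAt_centeredXi_ne_top (by fun_prop) hSR hS hxiS hσball hσ0
    (by rwa [centeredXi_neg]), hSdef, Finset.sum_image fun x _ y _ hxy ↦ by simpa using hxy,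
    Finset.sum_congr rfl fun γ _ ↦ hterm γ, Finset.sum_neg_distrib, ← Finset.mul_sum,
    logDeriv_centeredXi_neg]
  have hσC : (σ : ℂ) ≠ 0 := ofReal_ne_zero.2 hσ.ne'
  field_simp
  ring

-- On the circle the weight `1 + w² / R²` has norm `2 |Re w| / R`, which absorbs the blow-up of
-- the logarithmic derivative near the imaginary axis, where the zeros lie.
lemma exists_norm_circleIntegral_logDeriv_centeredXi_le : ∃ K, 0 ≤ K ∧ ∀ R σ : ℝ, 0 < σ → σ < R →
    ‖∮ w in C(0, R), 2 * σ / (w ^ 2 - σ ^ 2) * ((1 + w ^ 2 / R ^ 2) * logDeriv centeredXi w)‖ ≤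
      2 * Real.pi * (2 * σ * (K * ((1 + R) * √(1 + R)) / (R ^ 2 - σ ^ 2))) := by
  obtain ⟨K, hK, hxi⟩ := h.exists_abs_re_mul_norm_logDeriv_centeredXi_le
  refine ⟨2 * K, by positivity, fun R σ hσ hσR ↦ ?_⟩
  have hR : 0 < R := hσ.trans hσR
  have hRσ : 0 < R ^ 2 - σ ^ 2 := by nlinarith
  have hweight {w : ℂ} (hw : ‖w‖ = R) : ‖(1 + w ^ 2 / (R : ℂ) ^ 2) * logDeriv centeredXi w‖ ≤
      2 / R * (K * ((1 + R) * √(1 + R))) := by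
    rw [norm_mul, norm_one_add_sq_div_sq hR hw, mul_div_right_comm, mul_assoc]
    refine mul_le_mul_of_nonneg_left ?_ (by positivity)
    rcases eq_or_ne w.re 0 with hw0 | hw0
    · rw [hw0, abs_zero, zero_mul]
      positivity
    · simpa only [hw] using hxi w hw0
  refine (circleIntegral.norm_integral_le_of_norm_le_const hR.le fun w hw ↦ (norm_mul_le _ _).trans
    (mul_le_mul (norm_two_mul_div_sq_sub_sq_le hσ hσR (mem_sphere_zero_iff_norm.1 hw))
      (hweight (mem_sphere_zero_iff_norm.1 hw)) (norm_nonneg _) (by positivity))).trans_eq ?_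
  field_simp

lemma exists_abs_sub_sum_zeroOrdinates_le : ∃ K, ∀ R σ : ℝ, 0 < σ → 2 * σ ≤ R → 1 ≤ R →
    (∀ γ : ℝ, |γ| = R → zetaMult γ = 0) →
    |(1 + σ ^ 2 / R ^ 2) * ((logDeriv centeredXi σ).re / σ) -
      ∑ γ ∈ zeroOrdinates R, zetaMult γ * (1 - γ ^ 2 / R ^ 2) / (σ ^ 2 + γ ^ 2)| ≤ K / √R := by
  obtain ⟨K, hK, hbound⟩ := h.exists_norm_circleIntegral_logDeriv_centeredXi_le
  refine ⟨8 * K, fun R σ hσ hσR hR1 hgood ↦ ?_⟩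
  have hR : 0 < R := by linarith
  have hcircle := hbound R σ hσ (by linarith)
  rw [h.circleIntegral_logDeriv_centeredXi hσ (by linarith) hgood] at hcircle
  set E : ℂ := (1 + σ ^ 2 / R ^ 2) * (logDeriv centeredXi σ / σ) -
    ∑ γ ∈ zeroOrdinates R, (zetaMult γ * (1 - γ ^ 2 / R ^ 2) / (σ ^ 2 + γ ^ 2) : ℂ) with hE
  have hEre : E.re = (1 + σ ^ 2 / R ^ 2) * ((logDeriv centeredXi σ).re / σ) -
      ∑ γ ∈ zeroOrdinates R, zetaMult γ * (1 - γ ^ 2 / R ^ 2) / (σ ^ 2 + γ ^ 2) := by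
    rw [hE, ← div_ofReal_re, ← re_ofReal_mul, ← ofReal_re (∑ γ ∈ _, _), ← sub_re]
    push_cast
    rfl
  have hEnorm : ‖E‖ ≤ K * ((1 + R) * √(1 + R)) / (R ^ 2 - σ ^ 2) := by
    rw [norm_mul, norm_mul, norm_mul, norm_mul, norm_mul, norm_I, norm_ofNat,
      Complex.norm_of_nonneg Real.pi_pos.le, Complex.norm_of_nonneg hσ.le, mul_one] at hcircle
    exact le_of_mul_le_mul_left (le_of_mul_le_mul_left hcircle (by positivity)) (by positivity)
  have hsqrt : √(1 + R) ≤ 2 * √R := by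
    rw [Real.sqrt_le_left (by positivity), mul_pow, Real.sq_sqrt hR.le]
    linarith
  rw [← hEre]
  calc |E.re| ≤ K * ((1 + R) * √(1 + R)) / (R ^ 2 - σ ^ 2) := (abs_re_le_norm E).trans hEnorm
    _ ≤ K * (2 * R * (2 * √R)) / (R ^ 2 / 2) := by
        gcongr
        · linarith
        · nlinarith
    _ = 8 * K * (√R / R) := by
        field_simp
        ring
    _ = 8 * K / √R := by
        rw [Real.sqrt_div_self']
        ring

end SignHypothesis

end XiContour

section ZeroSums

lemma tendsto_sq_div_sq_zero {R : ℕ → ℝ} (hR : Tendsto R atTop atTop) (x : ℝ) :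
    Tendsto (fun n ↦ x ^ 2 / R n ^ 2) atTop (𝓝 0) :=
  tendsto_const_nhds.div_atTop ((tendsto_pow_atTop two_ne_zero).comp hR)

namespace SignHypothesis

variable {ε C : ℝ} (h : SignHypothesis ε C)
include h

lemma exists_tendsto_sum_zeroOrdinates : ∃ R : ℕ → ℝ, Tendsto R atTop atTop ∧ ∀ σ : ℝ, 0 < σ →
    Tendsto (fun n ↦ ∑ γ ∈ zeroOrdinates (R n),
      zetaMult γ * (1 - γ ^ 2 / R n ^ 2) / (σ ^ 2 + γ ^ 2)) atTop
      (𝓝 ((logDeriv centeredXi σ).re / σ)) := by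
  obtain ⟨K, hK⟩ := h.exists_abs_sub_sum_zeroOrdinates_le
  choose R hnR hgood using fun n : ℕ ↦ exists_zetaMult_eq_zero n
  have hR : Tendsto R atTop atTop := tendsto_atTop_mono hnR tendsto_natCast_atTop_atTop
  refine ⟨R, hR, fun σ hσ ↦ ?_⟩
  set L := (logDeriv centeredXi σ).re / σ
  have hmain : Tendsto (fun n ↦ (1 + σ ^ 2 / R n ^ 2) * L) atTop (𝓝 L) := by
    simpa using ((tendsto_sq_div_sq_zero hR σ).const_add 1).mul_const L
  have herror : Tendsto (fun n ↦ K / √(R n)) atTop (𝓝 0) :=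
    tendsto_const_nhds.div_atTop (Real.tendsto_sqrt_atTop.comp hR)
  have hdiff := squeeze_zero_norm' (f := fun n ↦ (1 + σ ^ 2 / R n ^ 2) * L -
      ∑ γ ∈ zeroOrdinates (R n), zetaMult γ * (1 - γ ^ 2 / R n ^ 2) / (σ ^ 2 + γ ^ 2)) (by
    filter_upwards [hR.eventually_ge_atTop (2 * σ), hR.eventually_ge_atTop 1] with n hnσ hn1
    exact hK (R n) σ hσ hnσ hn1 (hgood n)) herror
  simpa using hmain.sub hdiff

lemma sum_zetaMult_le {σ : ℝ} (hσ : 0 < σ) (T : Finset ℝ) :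
    ∑ γ ∈ T, zetaMult γ / (σ ^ 2 + γ ^ 2) ≤ (logDeriv centeredXi σ).re / σ := by
  obtain ⟨R, hR, hlim⟩ := h.exists_tendsto_sum_zeroOrdinates
  have hT : Tendsto (fun n ↦ ∑ γ ∈ T, zetaMult γ * (1 - γ ^ 2 / R n ^ 2) / (σ ^ 2 + γ ^ 2)) atTop
      (𝓝 (∑ γ ∈ T, zetaMult γ / (σ ^ 2 + γ ^ 2))) := by
    refine tendsto_finsetSum _ fun γ _ ↦ ?_
    simpa using (((tendsto_sq_div_sq_zero hR γ).const_sub 1).const_mul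
      (zetaMult γ : ℝ)).div_const (σ ^ 2 + γ ^ 2)
  refine le_of_tendsto_of_tendsto hT (hlim σ hσ) ?_
  have hTR : ∀ᶠ n in atTop, ∀ γ ∈ T, |γ| ≤ R n :=
    (eventually_all_finset T).2 fun γ _ ↦ hR.eventually_ge_atTop _
  filter_upwards [hTR] with n hn
  rw [← Finset.sum_filter_ne_zero]
  refine Finset.sum_le_sum_of_subset_of_nonneg (fun γ hγ ↦ ?_) fun γ hγ _ ↦ ?_
  · rw [Finset.mem_filter] at hγ
    exact mem_zeroOrdinates.2 ⟨fun hγ0 ↦ hγ.2 (by simp [hγ0]), hn γ hγ.1⟩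
  · have hγR : γ ^ 2 / R n ^ 2 ≤ 1 :=
      div_le_one_of_le₀ (sq_le_sq' (neg_le_of_abs_le (mem_zeroOrdinates.1 hγ).2)
        (le_of_abs_le (mem_zeroOrdinates.1 hγ).2)) (by positivity)
    have := sub_nonneg.2 hγR
    positivity

lemma re_logDeriv_centeredXi_le {σ K : ℝ} (hσ : 0 < σ)
    (hK : ∀ T : Finset ℝ, ∑ γ ∈ T, zetaMult γ / (σ ^ 2 + γ ^ 2) ≤ K) :
    (logDeriv centeredXi σ).re / σ ≤ K := by
  obtain ⟨R, -, hlim⟩ := h.exists_tendsto_sum_zeroOrdinates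
  refine le_of_tendsto' (hlim σ hσ) fun n ↦ (Finset.sum_le_sum fun γ _ ↦ ?_).trans (hK _)
  gcongr
  exact mul_le_of_le_one_right (by positivity) (sub_le_self _ (by positivity))

end SignHypothesis

end ZeroSums

section Positivity

open Complex MeasureTheory ProbabilityTheory

lemma sum_cexp_sub_mul_eq_normSq (A : Finset ℝ) (t : ℝ) :
    ∑ p ∈ A ×ˢ A, cexp (I * (p.1 - p.2 : ℝ) * t) = normSq (∑ a ∈ A, cexp (I * a * t)) := by
  rw [← mul_conj, map_sum, Finset.sum_mul_sum, Finset.sum_product]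
  refine Finset.sum_congr rfl fun a _ ↦ Finset.sum_congr rfl fun b _ ↦ ?_
  rw [← exp_conj, ← Complex.exp_add]
  simp only [map_mul, conj_I, conj_ofReal, ofReal_sub]
  ring_nf

lemma re_sum_complexMGF_mul_nonneg {Ω : Type*} {mΩ : MeasurableSpace Ω} {μ : Measure Ω} {X : Ω → ℝ}
    (hX : AEMeasurable X μ) {s : ℝ} (hs : s ∈ integrableExpSet X μ) (A : Finset ℝ) (y : ℝ) :
    0 ≤ (∑ p ∈ A ×ˢ A,
      complexMGF X μ (s + I * (p.1 - p.2 : ℝ)) * cexp (I * (p.1 - p.2 : ℝ) * y)).re := by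
  have hint (τ : ℝ) : Integrable (fun ω ↦ cexp ((s + I * τ) * X ω) * cexp (I * τ * y)) μ :=
    (integrable_cexp_mul_of_re_mem_integrableExpSet hX (by simpa using hs)).mul_const _
  have hsquare (ω : Ω) : ∑ p ∈ A ×ˢ A,
      cexp ((s + I * (p.1 - p.2 : ℝ)) * X ω) * cexp (I * (p.1 - p.2 : ℝ) * y) =
        (Real.exp (s * X ω) * normSq (∑ a ∈ A, cexp (I * a * (X ω + y : ℝ))) : ℝ) := by
    rw [ofReal_mul, ← sum_cexp_sub_mul_eq_normSq, Finset.mul_sum]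
    refine Finset.sum_congr rfl fun p _ ↦ ?_
    push_cast
    rw [← Complex.exp_add, ← Complex.exp_add]
    ring_nf
  have hsum : ∑ p ∈ A ×ˢ A,
      complexMGF X μ (s + I * (p.1 - p.2 : ℝ)) * cexp (I * (p.1 - p.2 : ℝ) * y) =
        ∫ ω, Real.exp (s * X ω) * normSq (∑ a ∈ A, cexp (I * a * (X ω + y : ℝ))) ∂μ := by
    simp_rw [complexMGF, ← integral_mul_const]
    rw [← integral_finsetSum _ fun p _ ↦ hint _, ← integral_complex_ofReal]
    exact integral_congr_ae (.of_forall hsquare)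
  rw [hsum, ofReal_re]
  exact integral_nonneg fun ω ↦ mul_nonneg (Real.exp_pos _).le (normSq_nonneg _)

lemma re_sum_div_sub_I_mul_nonneg {ι : Type*} {s : Finset ι} {c : ι → ℂ} {τ : ι → ℝ}
    (hc : ∀ y : ℝ, 0 ≤ (∑ i ∈ s, c i * cexp (I * τ i * y)).re) {σ : ℝ} (hσ : 0 < σ) :
    0 ≤ (∑ i ∈ s, c i / (σ - I * τ i)).re := by
  have hre (i : ι) : (-(σ - I * τ i)).re < 0 := by simpa using hσ
  have hint (i : ι) : IntegrableOn (fun y : ℝ ↦ c i * cexp (-(σ - I * τ i) * y)) (Set.Ioi 0) :=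
    (integrableOn_exp_mul_complex_Ioi (hre i) 0).const_mul _
  have hlaplace : ∑ i ∈ s, c i / (σ - I * τ i) =
      ∫ y in Set.Ioi (0 : ℝ), ∑ i ∈ s, c i * cexp (-(σ - I * τ i) * y) := by
    rw [integral_finsetSum _ fun i _ ↦ hint i]
    refine Finset.sum_congr rfl fun i _ ↦ ?_
    rw [integral_const_mul, integral_exp_mul_complex_Ioi (hre i), ofReal_zero, mul_zero,
      Complex.exp_zero, neg_div_neg_eq, mul_one_div]
  have hintegrand (y : ℝ) : ∑ i ∈ s, c i * cexp (-(σ - I * τ i) * y) =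
      Real.exp (-σ * y) * ∑ i ∈ s, c i * cexp (I * τ i * y) := by
    rw [Finset.mul_sum]
    refine Finset.sum_congr rfl fun i _ ↦ ?_
    push_cast
    rw [mul_left_comm, ← Complex.exp_add]
    ring_nf
  rw [hlaplace]
  refine (integral_nonneg fun y ↦ ?_).trans_eq
    (integral_re (integrable_finsetSum s fun i _ ↦ hint i))
  change 0 ≤ (∑ i ∈ s, c i * cexp (-(σ - I * τ i) * y)).re
  rw [hintegrand, re_ofReal_mul]
  exact mul_nonneg (Real.exp_pos _).le (hc y)

/-- The limit of `δ * mellinMGF (shiftedDelta ε C) (-1 / 2 + I * τ + δ)` as `δ` decreases to `0`,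
that is, the size of the simple pole which the transform has at `-1 / 2 + I * τ`. -/
noncomputable def boundaryCoeff (τ : ℝ) : ℂ :=
  (zetaMult τ + if τ = 0 then 1 / 2 else 0) / (1 / 2 - I * τ)

lemma re_inv_sub_I_mul (x τ : ℝ) : ((x - I * τ : ℂ)⁻¹).re = x / (x ^ 2 + τ ^ 2) := by
  simp [inv_re, normSq_apply, sq]

lemma sub_half_mul_re_boundaryCoeff_div_le {σ : ℝ} (hσ : 0 < σ) (τ : ℝ) :
    (σ - 1 / 2) * (boundaryCoeff τ / (σ - I * τ)).re ≤ (if τ = 0 then 1 else 0) +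
      (1 / 2 * (zetaMult τ / ((1 / 2) ^ 2 + τ ^ 2)) - σ * (zetaMult τ / (σ ^ 2 + τ ^ 2))) := by
  set m : ℝ := zetaMult τ + if τ = 0 then 1 / 2 else 0 with hm
  have hhalf : ((1 / 2 : ℝ) - I * τ : ℂ) ≠ 0 := ne_zero_of_re_pos (by simp)
  have hσI : (σ - I * τ : ℂ) ≠ 0 := ne_zero_of_re_pos (by simpa using hσ)
  have hsplit : ((σ - 1 / 2 : ℝ) : ℂ) * (boundaryCoeff τ / (σ - I * τ)) =
      m * (((1 / 2 : ℝ) - I * τ : ℂ)⁻¹ - (σ - I * τ : ℂ)⁻¹) := by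
    have hcoeff : boundaryCoeff τ = m / ((1 / 2 : ℝ) - I * τ) := by
      rw [boundaryCoeff, hm]
      split_ifs <;> push_cast <;> rfl
    rw [hcoeff, inv_sub_inv hhalf hσI]
    field_simp
    push_cast
    ring
  rw [← re_ofReal_mul, hsplit, re_ofReal_mul, sub_re, re_inv_sub_I_mul, re_inv_sub_I_mul, hm]
  split_ifs with hτ
  · subst hτ
    have : 0 < σ⁻¹ := inv_pos.2 hσ
    have : σ / (σ ^ 2 + 0 ^ 2) = σ⁻¹ := by field_simp; ring
    rw [mul_div_left_comm, mul_div_left_comm σ, this]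
    norm_num
    linarith
  · exact le_of_eq (by ring)

namespace SignHypothesis

variable {ε C : ℝ} (h : SignHypothesis ε C)
include h

lemma re_sum_boundaryCoeff_mul_nonneg (A : Finset ℝ) (y : ℝ) :
    0 ≤ (∑ p ∈ A ×ˢ A, boundaryCoeff (p.1 - p.2) * cexp (I * (p.1 - p.2 : ℝ) * y)).re := by
  have hcoeff (τ : ℝ) : Tendsto (fun δ : ℝ ↦ (δ : ℂ) *
      mellinMGF (shiftedDelta ε C) ((-1 / 2 + δ : ℝ) + I * τ)) (𝓝[>] 0) (𝓝 (boundaryCoeff τ)) := by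
    have hlim := h.tendsto_mul_mellinMGF τ
    simp only [h.eq_one, ofReal_one, one_mul] at hlim ⊢
    refine hlim.congr fun δ ↦ ?_
    push_cast
    ring_nf
  refine ge_of_tendsto ((continuous_re.tendsto _).comp
    (tendsto_finsetSum _ fun p _ ↦ (hcoeff (p.1 - p.2)).mul_const _)) ?_
  filter_upwards [self_mem_nhdsWithin] with δ hδ
  have hs : -1 / 2 + δ ∈ mellinSet (shiftedDelta ε C) :=
    h.Ioi_subset_mellinSet (Set.mem_Ioi.2 (lt_add_of_pos_right _ hδ))
  simp only [Function.comp_apply, mul_assoc (δ : ℂ), ← Finset.mul_sum]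
  rw [re_ofReal_mul]
  exact mul_nonneg (le_of_lt hδ) (re_sum_complexMGF_mul_nonneg (by fun_prop) hs A y)

lemma sum_mul_zetaMult_sub_le {σ : ℝ} (hσ : 1 / 2 ≤ σ) (A : Finset ℝ) :
    ∑ p ∈ A ×ˢ A, σ * (zetaMult (p.1 - p.2) / (σ ^ 2 + (p.1 - p.2) ^ 2)) ≤
      A.card + ∑ p ∈ A ×ˢ A, 1 / 2 * (zetaMult (p.1 - p.2) / ((1 / 2) ^ 2 + (p.1 - p.2) ^ 2)) := by
  have hσ0 : 0 < σ := one_half_pos.trans_le hσ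
  have hdiag : ∑ p ∈ A ×ˢ A, (if p.1 - p.2 = 0 then 1 else 0 : ℝ) = A.card := by
    rw [Finset.sum_product]
    simp [sub_eq_zero]
  have hpos : 0 ≤ (σ - 1 / 2) * (∑ p ∈ A ×ˢ A,
      boundaryCoeff (p.1 - p.2) / (σ - I * (p.1 - p.2 : ℝ))).re :=
    mul_nonneg (sub_nonneg.2 hσ)
      (re_sum_div_sub_I_mul_nonneg (h.re_sum_boundaryCoeff_mul_nonneg A) hσ0)
  rw [re_sum, Finset.mul_sum] at hpos
  have hterms := hpos.trans
    (Finset.sum_le_sum fun p _ ↦ sub_half_mul_re_boundaryCoeff_div_le hσ0 (p.1 - p.2))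
  rw [Finset.sum_add_distrib, Finset.sum_sub_distrib, hdiag] at hterms
  linarith

end SignHypothesis

end Positivity

section AlmostInvariant

variable {G : Type*} [AddCommGroup G]

section

variable [DecidableEq G]

/-- The sums `∑ t ∈ T, n t • t` with coefficients `0 ≤ n t ≤ N`. Their number grows at most
polynomially in `N`, so they provide almost invariant sets under translation by elements of `T`. -/
def boxSums (T : Finset G) (N : ℕ) : Finset G :=
  (Fintype.piFinset fun _ : T ↦ Finset.range (N + 1)).image fun n ↦ ∑ t : T, n t • (t : G)

lemma mem_boxSums {T : Finset G} {N : ℕ} {x : G} :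
    x ∈ boxSums T N ↔ ∃ n : T → ℕ, (∀ t, n t ≤ N) ∧ ∑ t : T, n t • (t : G) = x := by
  simp [boxSums]

lemma boxSums_nonempty (T : Finset G) (N : ℕ) : (boxSums T N).Nonempty :=
  ⟨0, mem_boxSums.2 ⟨0, by simp⟩⟩

lemma boxSums_subset_succ (T : Finset G) (N : ℕ) : boxSums T N ⊆ boxSums T (N + 1) := by
  intro x hx
  obtain ⟨n, hn, hnx⟩ := mem_boxSums.1 hx
  exact mem_boxSums.2 ⟨n, fun t ↦ (hn t).trans N.le_succ, hnx⟩

lemma add_mem_boxSums_succ {T : Finset G} {N : ℕ} {x t : G} (hx : x ∈ boxSums T N) (ht : t ∈ T) :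
    x + t ∈ boxSums T (N + 1) := by
  obtain ⟨n, hn, rfl⟩ := mem_boxSums.1 hx
  refine mem_boxSums.2 ⟨n + Pi.single ⟨t, ht⟩ 1, fun u ↦ add_le_add (hn u) ?_, ?_⟩
  · rw [Pi.single_apply]
    split_ifs <;> simp
  · simp [add_smul, Finset.sum_add_distrib, Pi.single_apply, ite_smul]

lemma card_boxSums_le (T : Finset G) (N : ℕ) : (boxSums T N).card ≤ (N + 1) ^ T.card :=
  Finset.card_image_le.trans_eq (by simp [Fintype.card_piFinset])

lemma exists_card_boxSums_succ_le (T : Finset G) {η : ℝ} (hη : 0 < η) :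
    ∃ N, ((boxSums T (N + 1)).card : ℝ) ≤ (1 + η) * (boxSums T N).card := by
  by_contra! hgrow
  have hexp (N : ℕ) : (1 + η) ^ N ≤ (boxSums T N).card := by
    induction N with
    | zero => simpa using (boxSums_nonempty T 0).card_pos
    | succ N ih =>
      calc (1 + η) ^ (N + 1) = (1 + η) * (1 + η) ^ N := pow_succ' ..
        _ ≤ (1 + η) * (boxSums T N).card := by gcongr
        _ ≤ (boxSums T (N + 1)).card := (hgrow N).le
  have hlim := (tendsto_pow_const_div_const_pow_of_one_lt T.card
    (lt_add_of_pos_right 1 hη)).comp (tendsto_add_atTop_nat 1)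
  obtain ⟨N, hN⟩ := (hlim.eventually_lt_const (show 0 < (1 + η)⁻¹ by positivity)).exists
  rw [Function.comp_apply, div_lt_iff₀ (by positivity), pow_succ', inv_mul_cancel_left₀
    (by positivity)] at hN
  have hpoly : ((boxSums T N).card : ℝ) ≤ ((N + 1 : ℕ) : ℝ) ^ T.card := by
    exact_mod_cast card_boxSums_le T N
  exact absurd ((hexp N).trans hpoly) hN.not_ge

lemma exists_almost_invariant (T : Finset G) {η : ℝ} (hη : 0 < η) : ∃ A : Finset G, A.Nonempty ∧
    ∀ t ∈ T, (1 - η) * A.card ≤ ({a ∈ A | a - t ∈ A} : Finset G).card := by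
  obtain ⟨N, hN⟩ := exists_card_boxSums_succ_le T hη
  set A := boxSums T N
  refine ⟨A, boxSums_nonempty T N, fun t ht ↦ ?_⟩
  have hinter : ({a ∈ A | a - t ∈ A} : Finset G) = A ∩ A.image (· + t) := by
    ext a
    simp [sub_eq_add_neg]
  have hunion : (A ∪ A.image (· + t)).card ≤ (boxSums T (N + 1)).card := by
    refine Finset.card_le_card (Finset.union_subset (boxSums_subset_succ T N) ?_)
    exact Finset.image_subset_iff.2 fun a ha ↦ add_mem_boxSums_succ ha ht
  have hcard : (A ∪ A.image (· + t)).card + (A ∩ A.image (· + t)).card = A.card + A.card := by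
    rw [Finset.card_union_add_card_inter, Finset.card_image_of_injective _ (add_left_injective t)]
  rw [hinter]
  rify at hunion hcard
  linarith

lemma mul_sum_le_sum_sub {Q : G → ℝ} (hQ : ∀ x, 0 ≤ Q x) {T A : Finset G} {c : ℝ}
    (hA : ∀ t ∈ T, c ≤ ({a ∈ A | a - t ∈ A} : Finset G).card) :
    c * ∑ t ∈ T, Q t ≤ ∑ p ∈ A ×ˢ A, Q (p.1 - p.2) := by
  calc c * ∑ t ∈ T, Q t = ∑ t ∈ T, c * Q t := Finset.mul_sum ..
    _ ≤ ∑ t ∈ T, ∑ a ∈ A with a - t ∈ A, Q t := by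
        refine Finset.sum_le_sum fun t ht ↦ ?_
        rw [Finset.sum_const, nsmul_eq_mul]
        exact mul_le_mul_of_nonneg_right (hA t ht) (hQ t)
    _ = ∑ a ∈ A, ∑ t ∈ T with a - t ∈ A, Q t := by
        simp only [Finset.sum_filter]
        exact Finset.sum_comm
    _ ≤ ∑ a ∈ A, ∑ b ∈ A, Q (a - b) := by
        refine Finset.sum_le_sum fun a _ ↦ ?_
        rw [← Finset.sum_image (f := Q) (g := fun b ↦ a - b) sub_right_injective.injOn]
        refine Finset.sum_le_sum_of_subset_of_nonneg (fun t ht ↦ ?_) fun _ _ _ ↦ hQ _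
        exact Finset.mem_image.2 ⟨a - t, (Finset.mem_filter.1 ht).2, sub_sub_cancel a t⟩
    _ = ∑ p ∈ A ×ˢ A, Q (p.1 - p.2) := (Finset.sum_product' ..).symm

end

lemma sum_sub_le_card_mul {P : G → ℝ} {B : ℝ} (hP : ∀ U : Finset G, ∑ x ∈ U, P x ≤ B)
    (A : Finset G) : ∑ p ∈ A ×ˢ A, P (p.1 - p.2) ≤ A.card * B := by
  classical
  rw [Finset.sum_product, ← nsmul_eq_mul, ← Finset.sum_const]
  refine Finset.sum_le_sum fun a _ ↦ ?_
  rw [← Finset.sum_image (f := P) (g := fun b ↦ a - b) sub_right_injective.injOn]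
  exact hP _

lemma sum_le_of_sum_sub_le_card_mul {Q : G → ℝ} (hQ : ∀ x, 0 ≤ Q x) {K : ℝ}
    (hK : ∀ A : Finset G, ∑ p ∈ A ×ˢ A, Q (p.1 - p.2) ≤ A.card * K) (T : Finset G) :
    ∑ t ∈ T, Q t ≤ K := by
  classical
  have hη (η : ℝ) (hη : 0 < η) : (1 - η) * ∑ t ∈ T, Q t ≤ K := by
    obtain ⟨A, hA, hAT⟩ := exists_almost_invariant T hη
    refine le_of_mul_le_mul_left ?_ (Nat.cast_pos.2 hA.card_pos : (0 : ℝ) < A.card)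
    calc A.card * ((1 - η) * ∑ t ∈ T, Q t) = (1 - η) * A.card * ∑ t ∈ T, Q t := by ring
      _ ≤ A.card * K := (mul_sum_le_sum_sub hQ hAT).trans (hK A)
  have hlim : Tendsto (fun η : ℝ ↦ (1 - η) * ∑ t ∈ T, Q t) (𝓝[>] 0) (𝓝 (∑ t ∈ T, Q t)) := by
    have hcont : Continuous fun η : ℝ ↦ (1 - η) * ∑ t ∈ T, Q t := by fun_prop
    simpa using (hcont.tendsto 0).mono_left nhdsWithin_le_nhds
  refine le_of_tendsto hlim ?_
  filter_upwards [self_mem_nhdsWithin] with η using hη η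

end AlmostInvariant

namespace SignHypothesis

variable {ε C : ℝ} (h : SignHypothesis ε C)
include h

lemma mul_sum_zetaMult_le {σ : ℝ} (hσ : 1 / 2 ≤ σ) (T : Finset ℝ) :
    ∑ γ ∈ T, σ * (zetaMult γ / (σ ^ 2 + γ ^ 2)) ≤
      1 + (logDeriv centeredXi (1 / 2 : ℝ)).re := by
  refine sum_le_of_sum_sub_le_card_mul (fun γ ↦ by positivity) (fun A ↦ ?_) T
  have hhalf (U : Finset ℝ) : ∑ γ ∈ U, 1 / 2 * (zetaMult γ / ((1 / 2) ^ 2 + γ ^ 2)) ≤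
      (logDeriv centeredXi (1 / 2 : ℝ)).re := by
    have := h.sum_zetaMult_le one_half_pos U
    rw [← Finset.mul_sum]
    linarith
  have hA := sum_sub_le_card_mul hhalf A
  linarith [h.sum_mul_zetaMult_sub_le hσ A]

theorem elim : False := by
  set B := (logDeriv centeredXi (1 / 2 : ℝ)).re
  obtain ⟨σ, hlarge, hσ1⟩ := ((tendsto_re_logDeriv_centeredXi.eventually_gt_atTop (1 + B)).and
    (eventually_ge_atTop 1)).exists
  have hσ : 0 < σ := by linarith
  have hbound : (logDeriv centeredXi σ).re / σ ≤ (1 + B) / σ := by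
    refine h.re_logDeriv_centeredXi_le hσ fun T ↦ ?_
    rw [le_div_iff₀' hσ, Finset.mul_sum]
    exact h.mul_sum_zetaMult_le (by linarith) T
  rw [div_le_div_iff_of_pos_right hσ] at hbound
  linarith

end SignHypothesis

section EulerConstants

/-- The sum `γ + ∑_{i < r} log p_i / (p_i - 1)` over the first `r` primes, that is, the second
factor of `gammaR r`. -/
noncomputable def eulerPartial (r : ℕ) : ℝ :=
  Real.eulerMascheroniConstant + ∑ i ∈ Finset.range r, primeCoeff (Nat.nth Nat.Prime i)

lemma prime_nth (i : ℕ) : (Nat.nth Nat.Prime i).Prime :=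
  Nat.nth_mem_of_infinite Nat.infinite_setOfPred_prime i

lemma nth_prime_strictMono : StrictMono (Nat.nth Nat.Prime) :=
  Nat.nth_strictMono Nat.infinite_setOfPred_prime

lemma nth_prime_succ_le_two_mul (r : ℕ) :
    Nat.nth Nat.Prime (r + 1) ≤ 2 * Nat.nth Nat.Prime r := by
  obtain ⟨q, hq, hlt, hle⟩ := Nat.exists_prime_lt_and_le_two_mul _ (prime_nth r).ne_zero
  rw [← Nat.nth_count hq] at hlt hle
  exact (nth_prime_strictMono.monotone (nth_prime_strictMono.lt_iff_lt.1 hlt)).trans hle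

lemma primeCoeff_of_prime {p : ℕ} (hp : p.Prime) : primeCoeff p = Real.log p / ((p : ℝ) - 1) :=
  if_pos hp

lemma eulerPartial_succ (r : ℕ) :
    eulerPartial (r + 1) = eulerPartial r + primeCoeff (Nat.nth Nat.Prime r) := by
  rw [eulerPartial, eulerPartial, Finset.sum_range_succ, add_assoc]

lemma gammaR_eq (r : ℕ) : gammaR r =
    (∏ i ∈ Finset.range r, (1 - 1 / (Nat.nth Nat.Prime i : ℝ))) * eulerPartial r := by
  have hinj : Set.InjOn (Nat.nth Nat.Prime) (Finset.range r : Set ℕ) :=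
    nth_prime_strictMono.injective.injOn
  rw [gammaR, gammaP, eulerPartial, Finset.prod_image hinj, Finset.sum_image hinj]
  simp only [primeCoeff_of_prime (prime_nth _)]

lemma exists_gammaR_succ_sub (r : ℕ) : ∃ k : ℝ, 0 < k ∧ gammaR (r + 1) - gammaR r =
    k * (Real.log (Nat.nth Nat.Prime r) - eulerPartial r) := by
  have hp (i : ℕ) : (1 : ℝ) < Nat.nth Nat.Prime i := mod_cast (prime_nth i).one_lt
  have hp0 (i : ℕ) : (0 : ℝ) < Nat.nth Nat.Prime i := zero_lt_one.trans (hp i)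
  have hprod : 0 < ∏ i ∈ Finset.range r, (1 - 1 / (Nat.nth Nat.Prime i : ℝ)) :=
    Finset.prod_pos fun i _ ↦ sub_pos.2 ((div_lt_one (hp0 i)).2 (hp i))
  refine ⟨_, div_pos hprod (hp0 r), ?_⟩
  rw [gammaR_eq, gammaR_eq, Finset.prod_range_succ, eulerPartial_succ,
    primeCoeff_of_prime (prime_nth r)]
  have hne : (Nat.nth Nat.Prime r : ℝ) ≠ 0 := (hp0 r).ne'
  have hsub : (Nat.nth Nat.Prime r : ℝ) - 1 ≠ 0 := (sub_pos.2 (hp r)).ne'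
  field_simp
  ring

lemma gammaR_lt_succ_iff (r : ℕ) :
    gammaR r < gammaR (r + 1) ↔ eulerPartial r < Real.log (Nat.nth Nat.Prime r) := by
  obtain ⟨k, hk, hdiff⟩ := exists_gammaR_succ_sub r
  rw [← sub_pos, hdiff, mul_pos_iff_of_pos_left hk, sub_pos]

lemma gammaR_succ_lt_iff (r : ℕ) :
    gammaR (r + 1) < gammaR r ↔ Real.log (Nat.nth Nat.Prime r) < eulerPartial r := by
  obtain ⟨k, hk, hdiff⟩ := exists_gammaR_succ_sub r
  rw [← sub_neg, hdiff, ← smul_eq_mul, smul_neg_iff_of_pos_left hk, sub_neg]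

lemma sum_primeCoeff_Icc (m : ℕ) : ∑ n ∈ Finset.Icc 1 m, primeCoeff n =
    ∑ i ∈ Finset.range (Nat.count Nat.Prime (m + 1)), primeCoeff (Nat.nth Nat.Prime i) := by
  rw [← Finset.sum_image nth_prime_strictMono.injective.injOn]
  refine (Finset.sum_subset (fun n hn ↦ ?_) fun n hn hn' ↦ if_neg fun hp ↦ hn' ?_).symm
  · obtain ⟨i, hi, rfl⟩ := Finset.mem_image.1 hn
    exact Finset.mem_Icc.2 ⟨(prime_nth i).one_le,
      Nat.lt_succ_iff.1 (Nat.nth_lt_of_lt_count (Finset.mem_range.1 hi))⟩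
  · refine Finset.mem_image.2 ⟨Nat.count Nat.Prime n, Finset.mem_range.2 ?_, Nat.nth_count hp⟩
    exact Nat.count_strict_mono hp (Nat.lt_succ_iff.2 (Finset.mem_Icc.1 hn).2)

lemma primeDelta_eq (x : ℝ) :
    primeDelta x = eulerPartial (Nat.count Nat.Prime (⌊x⌋₊ + 1)) - Real.log x := by
  rw [primeDelta, eulerPartial, sum_primeCoeff_Icc]

lemma tendsto_count_prime_floor :
    Tendsto (fun x : ℝ ↦ Nat.count Nat.Prime (⌊x⌋₊ + 1)) atTop atTop := by
  have hcount : Tendsto (Nat.count Nat.Prime) atTop atTop :=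
    (Nat.count_monotone _).tendsto_atTop_atTop fun n ↦
      ⟨Nat.nth Nat.Prime n, (Nat.count_nth_of_infinite Nat.infinite_setOfPred_prime n).ge⟩
  exact hcount.comp ((tendsto_add_atTop_nat 1).comp tendsto_nat_floor_atTop)

lemma lt_nth_count_floor (x : ℝ) :
    x < Nat.nth Nat.Prime (Nat.count Nat.Prime (⌊x⌋₊ + 1)) := by
  refine (Nat.lt_floor_add_one x).trans_le ?_
  exact_mod_cast Nat.le_nth_count Nat.infinite_setOfPred_prime (⌊x⌋₊ + 1)

lemma nth_le_of_lt_count_floor {x : ℝ} (hx : 0 ≤ x) {r : ℕ}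
    (hr : r < Nat.count Nat.Prime (⌊x⌋₊ + 1)) : (Nat.nth Nat.Prime r : ℝ) ≤ x :=
  (Nat.le_floor_iff hx).1 (Nat.lt_succ_iff.1 (Nat.nth_lt_of_lt_count hr))

lemma exists_signHypothesis {ε K : ℝ} (hε : |ε| = 1)
    (h : ∀ᶠ x in atTop, -(K * x ^ (-(3 / 4) : ℝ)) ≤ ε * primeDelta x) :
    ∃ C, SignHypothesis ε C := by
  obtain ⟨x₀, hx₀⟩ := (h.and (eventually_ge_atTop 1)).exists_forall_of_atTop
  have hx₀1 : 1 ≤ x₀ := (hx₀ x₀ le_rfl).2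
  set M : ℝ := (|Real.eulerMascheroniConstant| + 2) * x₀ ^ (7 / 4 : ℝ) with hM
  refine ⟨max K M, hε, (by positivity : 0 ≤ M).trans (le_max_right _ _), fun x hx ↦ ?_⟩
  have hx0 : 0 < x := zero_lt_one.trans hx
  suffices -(max K M * x ^ (-(3 / 4) : ℝ)) ≤ ε * primeDelta x by
    rw [shiftedDelta]
    linarith
  rcases le_total x₀ x with hle | hle
  · refine le_trans (neg_le_neg ?_) (hx₀ x hle).1
    gcongr
    exact le_max_left K M
  · refine neg_le_of_abs_le ?_
    rw [abs_mul, hε, one_mul]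
    calc |primeDelta x| ≤ (|Real.eulerMascheroniConstant| + 2) * x ^ (1 : ℝ) := abs_primeDelta_le hx
      _ = (|Real.eulerMascheroniConstant| + 2) * x ^ (7 / 4 : ℝ) * x ^ (-(3 / 4) : ℝ) := by
          rw [mul_assoc, ← Real.rpow_add hx0]
          norm_num
      _ ≤ M * x ^ (-(3 / 4) : ℝ) := by
          rw [hM]
          gcongr
      _ ≤ max K M * x ^ (-(3 / 4) : ℝ) := by
          gcongr
          exact le_max_right K M

theorem infinite_gammaR_lt_succ : {r : ℕ | gammaR r < gammaR (r + 1)}.Infinite := by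
  rw [← Nat.frequently_atTop_iff_infinite]
  intro hev
  have hsign : ∀ᶠ x : ℝ in atTop, -(0 * x ^ (-(3 / 4) : ℝ)) ≤ 1 * primeDelta x := by
    filter_upwards [tendsto_count_prime_floor.eventually hev, eventually_gt_atTop 0] with x hx hx0
    rw [gammaR_lt_succ_iff, not_lt] at hx
    rw [primeDelta_eq]
    linarith [Real.log_le_log hx0 (lt_nth_count_floor x).le]
  obtain ⟨C, hC⟩ := exists_signHypothesis abs_one hsign
  exact hC.elim

lemma log_div_sub_one_le {y : ℝ} (hy : 2 ≤ y) :
    Real.log y / (y - 1) ≤ 8 * y ^ (-(3 / 4) : ℝ) := by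
  have hy0 : 0 < y := by linarith
  have hpow : 0 < y ^ (-(3 / 4) : ℝ) := Real.rpow_pos_of_pos hy0 _
  rw [div_le_iff₀ (by linarith)]
  calc Real.log y ≤ y ^ (1 / 4 : ℝ) / (1 / 4) := Real.log_le_rpow_div hy0.le (by norm_num)
    _ = 4 * y ^ (-(3 / 4) : ℝ) * y := by
        rw [mul_assoc, ← Real.rpow_add_one hy0.ne']
        norm_num
        ring
    _ ≤ 8 * y ^ (-(3 / 4) : ℝ) * (y - 1) := by nlinarith

lemma primeCoeff_le_of_le_two_mul {p : ℕ} (hp : p.Prime) {x : ℝ} (hx : 0 < x) (hxp : x ≤ 2 * p) :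
    primeCoeff p ≤ 16 * x ^ (-(3 / 4) : ℝ) := by
  have htwo : (2 : ℝ) ^ (3 / 4 : ℝ) ≤ 2 := Real.rpow_le_self_of_one_le one_le_two (by norm_num)
  calc primeCoeff p = Real.log p / ((p : ℝ) - 1) := primeCoeff_of_prime hp
    _ ≤ 8 * (p : ℝ) ^ (-(3 / 4) : ℝ) := log_div_sub_one_le (mod_cast hp.two_le)
    _ ≤ 8 * (x / 2) ^ (-(3 / 4) : ℝ) := by
        gcongr ?_ * ?_
        exact Real.rpow_le_rpow_of_nonpos (by positivity) (by linarith) (by norm_num)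
    _ = 8 * 2 ^ (3 / 4 : ℝ) * x ^ (-(3 / 4) : ℝ) := by
        rw [Real.div_rpow hx.le zero_le_two, Real.rpow_neg zero_le_two, div_inv_eq_mul]
        ring
    _ ≤ 16 * x ^ (-(3 / 4) : ℝ) := by
        gcongr
        linarith

lemma primeDelta_le_of_eulerPartial_le {x : ℝ} (hx : 0 ≤ x) {r : ℕ}
    (hr : Nat.count Nat.Prime (⌊x⌋₊ + 1) = r + 1)
    (hle : eulerPartial r ≤ Real.log (Nat.nth Nat.Prime r)) :
    primeDelta x ≤ 16 * x ^ (-(3 / 4) : ℝ) := by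
  have hnth : (Nat.nth Nat.Prime r : ℝ) ≤ x :=
    nth_le_of_lt_count_floor hx (hr ▸ r.lt_succ_self)
  have hp : (0 : ℝ) < Nat.nth Nat.Prime r := mod_cast (prime_nth r).pos
  have hbertrand : x ≤ 2 * Nat.nth Nat.Prime r := by
    refine (hr ▸ lt_nth_count_floor x).le.trans ?_
    exact_mod_cast nth_prime_succ_le_two_mul r
  have hcoeff := primeCoeff_le_of_le_two_mul (prime_nth r) (hp.trans_le hnth) hbertrand
  rw [primeDelta_eq, hr, eulerPartial_succ]
  linarith [Real.log_le_log hp hnth]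

theorem infinite_gammaR_succ_lt : {r : ℕ | gammaR (r + 1) < gammaR r}.Infinite := by
  rw [← Nat.frequently_atTop_iff_infinite]
  intro hev
  have hsign : ∀ᶠ x : ℝ in atTop, -(16 * x ^ (-(3 / 4) : ℝ)) ≤ -1 * primeDelta x := by
    filter_upwards [((tendsto_sub_atTop_nat 1).comp tendsto_count_prime_floor).eventually hev,
      tendsto_count_prime_floor.eventually_ge_atTop 1, eventually_ge_atTop 0] with x hx hcount hx0
    obtain ⟨r, hr⟩ := Nat.exists_eq_add_one.2 hcount
    rw [Function.comp_apply, hr, Nat.add_sub_cancel, gammaR_succ_lt_iff, not_lt] at hx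
    rw [neg_one_mul, neg_le_neg_iff]
    exact primeDelta_le_of_eulerPartial_le hx0 hr hx
  obtain ⟨C, hC⟩ := exists_signHypothesis (by simp) hsign
  exact hC.elim

end EulerConstants

/-- There are infinitely many `r` with `γ_{r+1} > γ_r` and infinitely many with
`γ_{r+1} < γ_r`. -/
theorem gammaR_not_monotone :
    {r : ℕ | gammaR r < gammaR (r + 1)}.Infinite ∧
    {r : ℕ | gammaR (r + 1) < gammaR r}.Infinite :=
  ⟨infinite_gammaR_lt_succ, infinite_gammaR_succ_lt⟩
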